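/- arXiv:2002.11809 — 3 statements merged into one kernel-verified Lean document; each statement's English description precedes it below -/
import Mathlib

section
/- Let (D*_1, D*_2) be a random vector with the limiting bidegree distribution \bar f_2, under a power-law layer type distribution. Denote δ_t = t^{1/2} ln⁴(2+t). Then for t_1, t_2 → ∞ such that (t_2 − t_1)/δ_{t_2} → ∞, one has P(D*_1 = t_1, D*_2 = t_2) = (1 + o(1)) c'' (t_2 − t_1)^{−1−(α−2)/(1−β)} t_1^{−(α−2)/(1−β)}, where c'' = μ a² b^{2(α−2)/(1−β)} (1−β)^{−2} P_{21}^{−1}. -/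
open MeasureTheory ProbabilityTheory Filter
open scoped ENNReal Topology Classical

noncomputable section

/-- The binomial probability mass function `Bin(x,y)(s)`. -/
def binP (x : ℕ) (y : ℝ) (s : ℕ) : ℝ := (x.choose s : ℝ) * y ^ s * (1 - y) ^ (x - s)

/-- Convolution of (mass) functions on `ℕ`. -/
def conv (f g : ℕ → ℝ) (s : ℕ) : ℝ := ∑ i ∈ Finset.range (s + 1), f i * g (s - i)

/-- Iterated convolution power: `convPow f j` is the `j`-fold convolution of `f`. -/
def convPow (f : ℕ → ℝ) : ℕ → ℕ → ℝ
  | 0 => fun s => if s = 0 then 1 else 0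
  | j + 1 => conv f (convPow f j)

/-- The compound Poisson probability mass function `CPoi(lam, f)`, i.e. the law of
`H_1 + ⋯ + H_Λ` where `Λ ~ Poi(lam)` and the `H_k` are i.i.d. with mass function `f`,
independent of `Λ`. -/
def cpoi (lam : ℝ) (f : ℕ → ℝ) (s : ℕ) : ℝ :=
  ∑' j : ℕ, Real.exp (-lam) * lam ^ j / (j.factorial : ℝ) * convPow f j s

/-- Convolution of (mass) functions on `ℕ × ℕ`. -/
def conv2 (F G : ℕ → ℕ → ℝ) (s t : ℕ) : ℝ :=
  ∑ i ∈ Finset.range (s + 1), ∑ j ∈ Finset.range (t + 1), F i j * G (s - i) (t - j)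

/-- Point mass at `(1,1)`, as a mass function on `ℕ × ℕ`. -/
def delta11 (s t : ℕ) : ℝ := if s = 1 ∧ t = 1 then 1 else 0

/-- The cross moment `P_{rs} = E[(X)_r Y^s]` for the layer type distribution
`P(dx,dy) = p(dx) δ_{q(x)}(dy)`. -/
def mom (p q : ℕ → ℝ) (r s : ℕ) : ℝ :=
  ∑' x : ℕ, (x.descFactorial r : ℝ) * q x ^ s * p x

/-- The increment distribution `g(s) = ∫ Bin(x-1,y)(s) x P(dx,dy) / P₁₀` for
`P(dx,dy) = p(dx) δ_{q(x)}(dy)`. -/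
def gInc (p q : ℕ → ℝ) (s : ℕ) : ℝ :=
  (∑' x : ℕ, (x : ℝ) * binP (x - 1) (q x) s * p x) / mom p q 1 0

/-- The limiting degree distribution `\bar f₁ = CPoi(μ P₁₀, g)`. -/
def barf1 (mu : ℝ) (p q : ℕ → ℝ) (s : ℕ) : ℝ :=
  cpoi (mu * mom p q 1 0) (gInc p q) s

/-- The distribution `f₂'` of `(D₁', D₂')`:
`f₂'(s,t) = ∫ Bin(x-2,y)(s) Bin(x-2,y)(t) (x)₂ y P(dx,dy) / P₂₁` for
`P(dx,dy) = p(dx) δ_{q(x)}(dy)`. -/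
def f2p (p q : ℕ → ℝ) (s t : ℕ) : ℝ :=
  (∑' x : ℕ, (x.descFactorial 2 : ℝ) * q x * binP (x - 2) (q x) s * binP (x - 2) (q x) t * p x) /
    mom p q 2 1

/-- The limiting bidegree distribution `\bar f₂ = δ₍₁,₁₎ ∗ (\bar f₁ ⊗ \bar f₁) ∗ f₂'`,
i.e. the joint law of `(D₁*, D₂*) = (1 + D₁ + D₁', 1 + D₂ + D₂')` where `D₁`, `D₂`,
`(D₁', D₂')` are mutually independent, `D₁, D₂ ~ \bar f₁` and `(D₁', D₂') ~ f₂'`. -/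
def barf2 (mu : ℝ) (p q : ℕ → ℝ) : ℕ → ℕ → ℝ :=
  conv2 (conv2 delta11 fun s t => barf1 mu p q s * barf1 mu p q t) (f2p p q)

/-- `δ_t = t^{1/2} ln⁴(2+t)`. -/
def deltaFn (t : ℕ) : ℝ := Real.sqrt t * Real.log (2 + (t : ℝ)) ^ (4 : ℕ)

lemma binP_eq (n : ℕ) (y : ℝ) (s : ℕ) : binP n y s = (bernsteinPolynomial ℝ n s).eval y := by
  simp [binP, bernsteinPolynomial]

lemma binP_nonneg (n : ℕ) {y : ℝ} (h0 : 0 ≤ y) (h1 : y ≤ 1) (s : ℕ) : 0 ≤ binP n y s := by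
  have : 0 ≤ 1 - y := by linarith
  unfold binP; positivity

lemma binP_zero_of_lt {n s : ℕ} (h : n < s) (y : ℝ) : binP n y s = 0 := by
  simp [binP, Nat.choose_eq_zero_of_lt h]

lemma binP_sum (n : ℕ) (y : ℝ) : ∑ k ∈ Finset.range (n + 1), binP n y k = 1 := by
  have := congrArg (Polynomial.eval y) (bernsteinPolynomial.sum ℝ n)
  simpa [Polynomial.eval_finsetSum, ← binP_eq] using this

lemma binP_sum_le (n : ℕ) {y : ℝ} (_h0 : 0 ≤ y) (_h1 : y ≤ 1) (A : Finset ℕ) :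
    ∑ k ∈ A, binP n y k ≤ ∑ k ∈ A ∩ Finset.range (n + 1), binP n y k := by
  have h : ∑ k ∈ A ∩ Finset.range (n + 1), binP n y k = ∑ k ∈ A, binP n y k := by
    apply Finset.sum_subset Finset.inter_subset_left
    intro k hk hk'
    apply binP_zero_of_lt
    simp only [Finset.mem_inter, Finset.mem_range, not_and] at hk'
    have := hk' hk
    omega
  rw [h]

lemma binP_sum_le_one (n : ℕ) {y : ℝ} (h0 : 0 ≤ y) (h1 : y ≤ 1) (A : Finset ℕ) :
    ∑ k ∈ A, binP n y k ≤ 1 := by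
  refine (binP_sum_le n h0 h1 A).trans ?_
  rw [← binP_sum n y]
  exact Finset.sum_le_sum_of_subset_of_nonneg Finset.inter_subset_right
    (fun k _ _ => binP_nonneg n h0 h1 k)

lemma binP_le_one (n : ℕ) {y : ℝ} (h0 : 0 ≤ y) (h1 : y ≤ 1) (s : ℕ) : binP n y s ≤ 1 := by
  simpa using binP_sum_le_one n h0 h1 {s}

lemma binP_hasSum (n : ℕ) (y : ℝ) : HasSum (fun k => binP n y k) 1 := by
  rw [← binP_sum n y]
  apply hasSum_sum_of_ne_finset_zero
  intro k hk
  apply binP_zero_of_lt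
  simp at hk; omega

lemma binP_cheb (n : ℕ) {y : ℝ} (h0 : 0 ≤ y) (h1 : y ≤ 1) (A : Finset ℕ) {z : ℝ} (hz : 0 < z)
    (hA : ∀ k ∈ A, z ≤ |(k : ℝ) - n * y|) : ∑ k ∈ A, binP n y k ≤ n * y / z ^ 2 := by
  have hv := congrArg (Polynomial.eval y) (bernsteinPolynomial.variance ℝ n)
  simp only [Polynomial.eval_finsetSum, Polynomial.eval_mul, Polynomial.eval_pow,
    Polynomial.eval_sub, nsmul_eq_mul, Polynomial.eval_natCast, Polynomial.eval_X,
    Polynomial.eval_one, ← binP_eq] at hv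
  rw [le_div_iff₀ (by positivity)]
  calc (∑ k ∈ A, binP n y k) * z ^ 2
      ≤ (∑ k ∈ A ∩ Finset.range (n + 1), binP n y k) * z ^ 2 := by
        exact mul_le_mul_of_nonneg_right (binP_sum_le n h0 h1 A) (by positivity)
    _ = ∑ k ∈ A ∩ Finset.range (n + 1), z ^ 2 * binP n y k := by
        rw [Finset.sum_mul]; simp_rw [mul_comm]
    _ ≤ ∑ k ∈ A ∩ Finset.range (n + 1), (n * y - k) ^ 2 * binP n y k := by
        apply Finset.sum_le_sum
        intro k hk
        have hk' := hA k (Finset.mem_inter.1 hk).1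
        have : z ^ 2 ≤ (n * y - k) ^ 2 := by
          rw [sq_le_sq, abs_of_pos hz, abs_sub_comm]; exact hk'
        exact mul_le_mul_of_nonneg_right this (binP_nonneg n h0 h1 k)
    _ ≤ ∑ k ∈ Finset.range (n + 1), (n * y - k) ^ 2 * binP n y k := by
        apply Finset.sum_le_sum_of_subset_of_nonneg Finset.inter_subset_right
        intro k _ _
        exact mul_nonneg (sq_nonneg _) (binP_nonneg n h0 h1 k)
    _ = n * y * (1 - y) := hv
    _ ≤ n * y := by
        have : 0 ≤ (n : ℝ) * y := by positivity
        nlinarith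

lemma binP_theta (n : ℕ) {y : ℝ} (h0 : 0 ≤ y) (h1 : y ≤ 1) (s : ℕ) {θ : ℝ} (hθ : 0 < θ) :
    binP n y s ≤ Real.exp (n * y * (θ - 1) - s * Real.log θ) := by
  by_cases hs : n < s
  · rw [binP_zero_of_lt hs]; positivity
  have h1y : 0 ≤ 1 - y := by linarith
  have key : binP n y s * θ ^ s ≤ (1 + y * (θ - 1)) ^ n := by
    have : (1 + y * (θ - 1)) = y * θ + (1 - y) := by ring
    rw [this, add_pow]
    have e : binP n y s * θ ^ s = (y * θ) ^ s * (1 - y) ^ (n - s) * (n.choose s) := by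
      unfold binP; rw [mul_pow]; ring
    rw [e]
    apply Finset.single_le_sum (f := fun m => (y * θ) ^ m * (1 - y) ^ (n - m) * (n.choose m : ℝ))
    · intro i _; positivity
    · simp; omega
  have h2 : (1 + y * (θ - 1)) ^ n ≤ Real.exp (n * y * (θ - 1)) := by
    have : 0 ≤ 1 + y * (θ - 1) := by nlinarith
    calc (1 + y * (θ - 1)) ^ n ≤ (Real.exp (y * (θ - 1))) ^ n := by
          gcongr; linarith [Real.add_one_le_exp (y * (θ - 1))]
      _ = _ := by rw [← Real.exp_nat_mul]; ring_nf
  rw [Real.exp_sub, le_div_iff₀ (Real.exp_pos _), Real.exp_nat_mul, Real.exp_log hθ]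
  exact key.trans h2

lemma cher_alg1 (s Z : ℝ) (h : 2 * s - Z ≠ 0) :
    (s - Z) * Z / (2 * s - Z) - Z / 2 = - (Z ^ 2 / (2 * (2 * s - Z))) := by
  rw [div_sub_div _ _ h two_ne_zero, ← neg_div, div_eq_div_iff (by simpa using h) (by simpa using h)]
  ring

lemma cher_alg2 (m Z : ℝ) (hm : m ≠ 0) (h : 2 * m - Z ≠ 0) :
    (m - Z) * (1 - ((2 * m - Z) / (2 * m))⁻¹) = - ((m - Z) * Z / (2 * m - Z)) := by
  rw [inv_div, one_sub_div h]
  ring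

lemma binP_chernoff (n : ℕ) {y : ℝ} (h0 : 0 ≤ y) (h1 : y ≤ 1) (s : ℕ) {z : ℝ} (hz : 0 < z)
    (h : z ≤ |(s : ℝ) - n * y|) : binP n y s ≤ Real.exp (-(z ^ 2 / (4 * (s + z)))) := by
  set m : ℝ := n * y with hm
  have hm0 : 0 ≤ m := by positivity
  set Z := |(s : ℝ) - m| with hZ
  have hZ0 : 0 < Z := lt_of_lt_of_le hz h
  have hs0 : (0 : ℝ) ≤ s := by positivity
  have mono : z ^ 2 / (4 * (s + z)) ≤ Z ^ 2 / (4 * (s + Z)) := by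
    rw [div_le_div_iff₀ (by positivity) (by positivity)]
    have h3 : z ^ 2 ≤ Z ^ 2 := by gcongr
    have h4 : z * Z * z ≤ z * Z * Z := by gcongr
    nlinarith
  refine le_trans ?_ (Real.exp_le_exp.2 (neg_le_neg mono))
  rcases le_total m s with hms | hms
  · have hZe : Z = s - m := by rw [hZ, abs_of_nonneg]; linarith
    have hsp : (0 : ℝ) < s := by linarith
    have hd : 0 < 2 * (s : ℝ) - Z := by linarith
    have hdne := hd.ne'
    have hth : 0 < 2 * (s : ℝ) / (2 * s - Z) := by positivity
    refine (binP_theta n h0 h1 s hth).trans (Real.exp_le_exp.2 ?_)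
    have hl := Real.one_sub_inv_le_log_of_pos hth
    have hl2 : (s : ℝ) * (1 - (2 * (s : ℝ) / (2 * s - Z))⁻¹) ≤
      s * Real.log (2 * (s : ℝ) / (2 * s - Z)) := by gcongr
    have e1 : (s : ℝ) * (1 - (2 * (s : ℝ) / (2 * s - Z))⁻¹) = Z / 2 := by
      field_simp; ring
    have e2 : m * (2 * (s : ℝ) / (2 * s - Z) - 1) = (s - Z) * Z / (2 * s - Z) := by
      rw [hZe]; have : 2 * (s : ℝ) - (s - m) ≠ 0 := by linarith
      field_simp; ring
    rw [← hm, e2]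
    have e3 : (s - Z) * Z / (2 * s - Z) - Z / 2 ≤ -(Z ^ 2 / (4 * (s + Z))) := by
      have := cher_alg1 s Z hdne
      rw [this, neg_le_neg_iff]
      apply div_le_div_of_nonneg_left (by positivity) (by positivity)
      linarith
    linarith
  · have hZe : Z = m - s := by rw [hZ, abs_of_nonpos] <;> linarith
    have hmp : (0 : ℝ) < m := by linarith
    have hd : 0 < 2 * m - Z := by linarith
    have hdne := hd.ne'
    have hth : 0 < (2 * m - Z) / (2 * m) := by positivity
    refine (binP_theta n h0 h1 s hth).trans (Real.exp_le_exp.2 ?_)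
    have hl := Real.one_sub_inv_le_log_of_pos hth
    have hl2 : (s : ℝ) * (1 - ((2 * m - Z) / (2 * m))⁻¹) ≤
      s * Real.log ((2 * m - Z) / (2 * m)) := by gcongr
    have e1 : (s : ℝ) * (1 - ((2 * m - Z) / (2 * m))⁻¹) = - ((m - Z) * Z / (2 * m - Z)) := by
      have : (s : ℝ) = m - Z := by linarith
      rw [this]; exact cher_alg2 m Z hmp.ne' hdne
    have e2 : m * ((2 * m - Z) / (2 * m) - 1) = - (Z / 2) := by
      field_simp; ring
    rw [← hm, e2]
    have e3 : (m - Z) * Z / (2 * m - Z) - Z / 2 ≤ -(Z ^ 2 / (4 * (s + Z))) := by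
      have := cher_alg1 m Z hdne
      rw [this, neg_le_neg_iff]
      apply div_le_div_of_nonneg_left (by positivity) (by positivity)
      linarith
    linarith

/-- binomial distribution function -/
def binF (s n : ℕ) (y : ℝ) : ℝ := ∑ k ∈ Finset.range (s + 1), binP n y k

lemma binP_succ_succ (n k : ℕ) (y : ℝ) :
    binP (n + 1) y (k + 1) = y * binP n y k + (1 - y) * binP n y (k + 1) := by
  unfold binP
  rw [Nat.choose_succ_succ]
  rcases lt_or_ge k n with h | h
  · obtain ⟨j, rfl⟩ := Nat.exists_eq_add_of_lt h
    have e1 : k + j + 1 + 1 - (k + 1) = j + 1 := by omega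
    have e2 : k + j + 1 - k = j + 1 := by omega
    have e3 : k + j + 1 - (k + 1) = j := by omega
    rw [e1, e2, e3]; push_cast; ring
  · have e1 : n + 1 - (k + 1) = 0 := by omega
    have e2 : n - k = 0 := by omega
    rw [e1, e2, Nat.choose_eq_zero_of_lt (show n < k + 1 by omega)]; push_cast; ring

lemma binF_succ (s n : ℕ) (y : ℝ) : binF s (n + 1) y = binF s n y - y * binP n y s := by
  induction s with
  | zero => simp [binF, binP]; ring
  | succ s ih =>
    have e : ∀ N, binF (s + 1) N y = binF s N y + binP N y (s + 1) := fun N => by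
      unfold binF; rw [Finset.sum_range_succ]
    rw [e, e, ih, binP_succ_succ]; ring

lemma binF_hasDerivAt (s n : ℕ) (y : ℝ) :
    HasDerivAt (binF s (n + 1)) (-((n + 1 : ℝ) * binP n y s)) y := by
  have e : binF s (n + 1) = fun y =>
      (∑ k ∈ Finset.range (s + 1), bernsteinPolynomial ℝ (n + 1) k).eval y := by
    ext y; simp [binF, binP_eq, Polynomial.eval_finsetSum]
  have d : Polynomial.derivative (∑ k ∈ Finset.range (s + 1), bernsteinPolynomial ℝ (n + 1) k)
      = -((n + 1 : ℕ) * bernsteinPolynomial ℝ n s) := by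
    induction s with
    | zero =>
      simp only [zero_add, Finset.range_one, Finset.sum_singleton]
      rw [bernsteinPolynomial.derivative_zero]; simp; ring
    | succ s ih =>
      rw [Finset.sum_range_succ, Polynomial.derivative_add, ih,
        bernsteinPolynomial.derivative_succ]
      · simp only [Nat.add_sub_cancel]; ring
      · ext y; simp [binF, binP_eq, Polynomial.eval_finsetSum]
  rw [e]
  have := Polynomial.hasDerivAt
    (∑ k ∈ Finset.range (s + 1), bernsteinPolynomial ℝ (n + 1) k) y
  rw [d] at this
  have e2 : -((n + 1 : ℝ) * binP n y s) =
      Polynomial.eval y (-((n + 1 : ℕ) * bernsteinPolynomial ℝ n s)) := by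
    rw [binP_eq]; simp
  rw [e2]; exact this

lemma binP_compare (n s : ℕ) {y z : ℝ} (hy0 : 0 < y) (hy1 : y < 1) (hz0 : 0 ≤ z) (hz1 : z ≤ 1) :
    binP n z s ≤ binP n y s * Real.exp ((z - y) * (s - n * y) / (y * (1 - y))) := by
  rcases lt_or_ge n s with h | h
  · simp [binP_zero_of_lt h]
  have h1y : 0 < 1 - y := by linarith
  have h1z : 0 ≤ 1 - z := by linarith
  have hA : z ^ s ≤ y ^ s * Real.exp (s * ((z - y) / y)) := by
    rw [Real.exp_nat_mul, ← mul_pow]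
    gcongr
    have := Real.add_one_le_exp ((z - y) / y)
    calc z = y * ((z - y) / y + 1) := by field_simp; ring
      _ ≤ _ := by gcongr
  have hB : (1 - z) ^ (n - s) ≤ (1 - y) ^ (n - s) *
      Real.exp ((n - s : ℕ) * ((y - z) / (1 - y))) := by
    rw [Real.exp_nat_mul, ← mul_pow]
    gcongr
    have := Real.add_one_le_exp ((y - z) / (1 - y))
    calc 1 - z = (1 - y) * ((y - z) / (1 - y) + 1) := by field_simp; ring
      _ ≤ _ := by gcongr
  have e : Real.exp ((z - y) * (s - n * y) / (y * (1 - y))) =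
      Real.exp (s * ((z - y) / y)) * Real.exp ((n - s : ℕ) * ((y - z) / (1 - y))) := by
    rw [← Real.exp_add, Nat.cast_sub h]
    congr 1
    field_simp; ring
  rw [e]
  unfold binP
  calc (n.choose s : ℝ) * z ^ s * (1 - z) ^ (n - s)
      ≤ (n.choose s : ℝ) * (y ^ s * Real.exp (s * ((z - y) / y))) * ((1 - y) ^ (n - s) *
      Real.exp ((n - s : ℕ) * ((y - z) / (1 - y)))) := by gcongr
    _ = _ := by ring


section local_part

variable {b β : ℝ} {q : ℕ → ℝ}

lemma q_pos (hb : 0 < b) (hq : ∀ x : ℕ, q x = min 1 (b * (x : ℝ) ^ (-β))) {x : ℕ} (hx : 1 ≤ x) :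
    0 < q x := by
  have : (0 : ℝ) < x := by exact_mod_cast hx
  rw [hq]; apply lt_min one_pos; positivity

lemma q_nonneg (hb : 0 < b) (hq : ∀ x : ℕ, q x = min 1 (b * (x : ℝ) ^ (-β))) (x : ℕ) :
    0 ≤ q x := by
  rw [hq]; apply le_min zero_le_one; positivity

lemma q_le_one (hq : ∀ x : ℕ, q x = min 1 (b * (x : ℝ) ^ (-β))) (x : ℕ) :
    q x ≤ 1 := by
  rw [hq]; exact min_le_left _ _

lemma q_eventually (_hb : 0 < b) (hβ0 : 0 ≤ β) (hb1 : β = 0 → b < 1)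
    (hq : ∀ x : ℕ, q x = min 1 (b * (x : ℝ) ^ (-β))) :
    ∃ l : ℝ, l < 1 ∧ Tendsto q atTop (𝓝 l) ∧ ∀ᶠ x in atTop, q x = b * (x : ℝ) ^ (-β) ∧ q x < 1 := by
  rcases hβ0.eq_or_lt with h | h
  · have hb' := hb1 h.symm
    have : ∀ x, q x = b := fun x => by rw [hq, ← h]; simp [hb'.le]
    refine ⟨b, hb', ?_, ?_⟩
    · rw [show q = fun _ => b from funext this]; exact tendsto_const_nhds
    · filter_upwards with x
      rw [this, ← h]; simp [hb']
  · have h1 : Tendsto (fun x : ℕ => b * (x : ℝ) ^ (-β)) atTop (𝓝 0) := by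
      have := ((tendsto_rpow_neg_atTop h).comp tendsto_natCast_atTop_atTop).const_mul b
      simpa using this
    have h2 : ∀ᶠ x : ℕ in atTop, b * (x : ℝ) ^ (-β) < 1 := h1.eventually (gt_mem_nhds one_pos)
    have h3 : ∀ᶠ x : ℕ in atTop, q x = b * (x : ℝ) ^ (-β) := by
      filter_upwards [h2] with x hx
      rw [hq, min_eq_right hx.le]
    refine ⟨0, one_pos, ?_, ?_⟩
    · exact h1.congr' (h3.mono fun x hx => hx.symm)
    · filter_upwards [h2, h3] with x hx hx'
      exact ⟨hx', hx' ▸ hx⟩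

lemma q_anti (hb : 0 < b) (hβ0 : 0 ≤ β) (hq : ∀ x : ℕ, q x = min 1 (b * (x : ℝ) ^ (-β))) {x : ℕ}
    (hx : 1 ≤ x) : q (x + 1) ≤ q x := by
  have : (0 : ℝ) < x := by exact_mod_cast hx
  rw [hq, hq]
  apply min_le_min le_rfl
  gcongr b * ?_
  apply Real.rpow_le_rpow_of_nonpos this (by push_cast; linarith) (by linarith)

lemma ratio_lim (r : ℕ) : Tendsto (fun x : ℕ => (((x - r : ℕ) : ℝ) + 1) / x) atTop (𝓝 1) := by
  have h1 : Tendsto (fun x : ℕ => 1 + (1 - (r : ℝ)) * ((x : ℝ))⁻¹) atTop (𝓝 1) := by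
    have := (tendsto_inv_atTop_nhds_zero_nat (𝕜 := ℝ)).const_mul (1 - (r : ℝ))
    simpa using this.const_add 1
  apply h1.congr'
  filter_upwards [eventually_ge_atTop (r + 1)] with x hx
  have : (x : ℝ) ≠ 0 := by
    have : 0 < x := by omega
    positivity
  rw [Nat.cast_sub (by omega)]
  field_simp; ring

lemma theta_lim (hb : 0 < b) (hβ0 : 0 ≤ β) (hb1 : β = 0 → b < 1)
    (hq : ∀ x : ℕ, q x = min 1 (b * (x : ℝ) ^ (-β))) (r : ℕ) :
    Tendsto (fun x : ℕ => (((x - r : ℕ) : ℝ) + 1) * (q x - q (x + 1)) / q x) atTop (𝓝 β) := by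
  obtain ⟨l, hl, hql, hqe⟩ := q_eventually hb hβ0 hb1 hq
  -- slope limit
  have hd : HasDerivAt (fun t : ℝ => (1 + t) ^ (-β)) (-β) 0 := by
    have := (HasDerivAt.rpow_const (p := -β) ((hasDerivAt_id (0 : ℝ)).const_add 1)
      (Or.inl (by simp)))
    simpa using this
  have h1 : Tendsto (fun x : ℕ => ((x : ℝ)⁻¹)) atTop (𝓝[≠] 0) := by
    rw [tendsto_nhdsWithin_iff]
    refine ⟨tendsto_inv_atTop_nhds_zero_nat, ?_⟩
    filter_upwards [eventually_ge_atTop 1] with x hx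
    have : (x : ℝ) ≠ 0 := by positivity
    simpa using (by omega : x ≠ 0)
  have h2 := (hasDerivAt_iff_tendsto_slope.1 hd).comp h1
  have h3 := (ratio_lim r).mul h2.neg
  simp only [neg_neg, one_mul] at h3
  apply h3.congr'
  filter_upwards [hqe, (tendsto_add_atTop_nat 1).eventually hqe, eventually_ge_atTop 1]
    with x hx hx1 hx0
  have hxp : (0 : ℝ) < x := by exact_mod_cast hx0
  rw [hx.1, hx1.1]
  simp only [Function.comp, slope_def_field]
  have e1 : ((x + 1 : ℕ) : ℝ) ^ (-β) = (x : ℝ) ^ (-β) * (1 + (x : ℝ)⁻¹) ^ (-β) := by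
    rw [← Real.mul_rpow (by positivity) (by positivity)]
    congr 1; push_cast; field_simp
  have hne : (x : ℝ) ^ (-β) ≠ 0 := by positivity
  rw [e1]
  simp only [add_zero, Real.one_rpow, sub_zero]
  field_simp
  ring

lemma D_eq (s n : ℕ) {y y' : ℝ} (hle : y' ≤ y) :
    ∃ ξ, y' ≤ ξ ∧ ξ ≤ y ∧ binF s n y - binF s (n + 1) y' =
      y * binP n y s - (n + 1) * (y - y') * binP n ξ s := by
  rcases hle.eq_or_lt with h | h
  · refine ⟨y, hle, le_rfl, ?_⟩
    rw [h, binF_succ]; ring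
  · obtain ⟨ξ, hξ, he⟩ := exists_hasDerivAt_eq_slope (binF s (n + 1))
      (fun t => -((n + 1 : ℝ) * binP n t s)) h
      (fun t _ => (binF_hasDerivAt s n t).continuousAt.continuousWithinAt)
      (fun t _ => binF_hasDerivAt s n t)
    refine ⟨ξ, hξ.1.le, hξ.2.le, ?_⟩
    rw [eq_div_iff (by linarith)] at he
    have := binF_succ s n y
    linarith

lemma D_bounds (s n : ℕ) {y y' : ℝ} (hle : y' ≤ y) (h0 : 0 < y') (h1 : y < 1) :
    y * binP n y s * (1 - (n + 1) * (y - y') / y *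
        Real.exp ((y - y') * |(s : ℝ) - n * y| / (y * (1 - y)))) ≤
      binF s n y - binF s (n + 1) y' ∧
    binF s n y - binF s (n + 1) y' ≤ y * binP n y s * (1 - (n + 1) * (y - y') / y *
        Real.exp (-((y - y') * (|(s : ℝ) - n * y| + n * (y - y')) / (y' * (1 - y))))) := by
  obtain ⟨ξ, hξ1, hξ2, he⟩ := D_eq s n hle
  have hy : 0 < y := by linarith
  have hξ0 : 0 < ξ := by linarith
  have hξ1' : ξ < 1 := by linarith
  have hB : 0 ≤ binP n y s := binP_nonneg n hy.le h1.le s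
  have h1y : 0 < 1 - y := by linarith
  have hd : 0 ≤ y - y' := by linarith
  have c1 : binP n ξ s ≤ binP n y s * Real.exp ((y - y') * |(s : ℝ) - n * y| / (y * (1 - y))) := by
    refine (binP_compare n s hy h1 hξ0.le hξ1'.le).trans ?_
    refine mul_le_mul_of_nonneg_left (Real.exp_le_exp.2
      (div_le_div_of_nonneg_right ?_ (by positivity))) hB
    refine (le_abs_self _).trans ?_
    rw [abs_mul]
    gcongr
    rw [abs_le]; constructor <;> linarith
  have c2 : binP n y s ≤ binP n ξ s *
      Real.exp ((y - y') * (|(s : ℝ) - n * y| + n * (y - y')) / (y' * (1 - y))) := by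
    have hB' : 0 ≤ binP n ξ s := binP_nonneg n hξ0.le hξ1'.le s
    refine (binP_compare n s hξ0 hξ1' hy.le h1.le).trans ?_
    refine mul_le_mul_of_nonneg_left (Real.exp_le_exp.2
      (div_le_div₀ (by positivity) ?_ (by positivity) (by gcongr))) hB'
    calc (y - ξ) * (s - n * ξ) ≤ |(y - ξ) * (s - n * ξ)| := le_abs_self _
      _ = |y - ξ| * |(s - n * y) + n * (y - ξ)| := by rw [abs_mul]; congr 2; ring
      _ ≤ |y - ξ| * (|(s - n * y)| + |n * (y - ξ)|) := by gcongr; exact abs_add_le _ _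
      _ ≤ (y - y') * (|(s : ℝ) - n * y| + n * (y - y')) := by
        rw [abs_mul, abs_of_nonneg (by linarith : 0 ≤ y - ξ), Nat.abs_cast]
        gcongr
  rw [he]
  set e1 := Real.exp ((y - y') * |(s : ℝ) - n * y| / (y * (1 - y)))
  constructor
  · have : (n + 1) * (y - y') * binP n ξ s ≤ (n + 1) * (y - y') * (binP n y s * e1) := by gcongr
    have e : y * binP n y s * (1 - (n + 1) * (y - y') / y * e1) =
      y * binP n y s - (n + 1) * (y - y') * (binP n y s * e1) := by field_simp
    linarith
  · rw [Real.exp_neg]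
    set e2 := Real.exp ((y - y') * (|(s : ℝ) - n * y| + n * (y - y')) / (y' * (1 - y)))
    have he2 : 0 < e2 := Real.exp_pos _
    have c3 : binP n y s * e2⁻¹ ≤ binP n ξ s := by
      rw [← div_eq_mul_inv, div_le_iff₀ he2]; exact c2
    have : (n + 1) * (y - y') * (binP n y s * e2⁻¹) ≤ (n + 1) * (y - y') * binP n ξ s := by gcongr
    have e : y * binP n y s * (1 - (n + 1) * (y - y') / y * e2⁻¹) =
      y * binP n y s - (n + 1) * (y - y') * (binP n y s * e2⁻¹) := by
        field_simp
    linarith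

/-- the filter `s → ∞`, `b x^(1-β) / s → 1` -/
def locF (b β : ℝ) : Filter (ℕ × ℕ) :=
  comap (fun z : ℕ × ℕ => z.1) atTop ⊓
    comap (fun z : ℕ × ℕ => b * (z.2 : ℝ) ^ (1 - β) / (z.1 : ℝ)) (𝓝 1)

lemma locF_fst : Tendsto (fun z : ℕ × ℕ => z.1) (locF b β) atTop :=
  tendsto_comap.mono_left inf_le_left

lemma locF_v : Tendsto (fun z : ℕ × ℕ => b * (z.2 : ℝ) ^ (1 - β) / (z.1 : ℝ)) (locF b β) (𝓝 1) :=
  tendsto_comap.mono_left inf_le_right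

lemma locF_snd (hb : 0 < b) (hβ1 : β < 1) :
    Tendsto (fun z : ℕ × ℕ => z.2) (locF b β) atTop := by
  have h1 : Tendsto (fun z : ℕ × ℕ => (z.1 : ℝ)) (locF b β) atTop :=
    tendsto_natCast_atTop_atTop.comp locF_fst
  have h2 := (locF_v (b := b) (β := β)).pos_mul_atTop one_pos h1
  have h3 : Tendsto (fun z : ℕ × ℕ => (z.2 : ℝ) ^ (1 - β)) (locF b β) atTop := by
    have := h2.const_mul_atTop (inv_pos.2 hb)
    apply this.congr'
    filter_upwards [locF_fst.eventually (eventually_ge_atTop 1)] with z hz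
    have : (z.1 : ℝ) ≠ 0 := by
      have : 0 < z.1 := hz
      positivity
    field_simp
  have h4 := (tendsto_rpow_atTop (show 0 < (1 - β)⁻¹ by
    apply inv_pos.2; linarith)).comp h3
  rw [← tendsto_natCast_atTop_iff (R := ℝ)]
  apply h4.congr
  intro z
  simp only [Function.comp]
  rw [← Real.rpow_mul (by positivity), mul_inv_cancel₀ (by linarith), Real.rpow_one]

lemma locF_extract {P : ℕ × ℕ → Prop} (h : ∀ᶠ z in locF b β, P z) :
    ∃ ε > 0, ∃ s0 : ℕ, ∀ s ≥ s0, ∀ x : ℕ, |b * (x : ℝ) ^ (1 - β) / (s : ℝ) - 1| < ε → P (s, x) := by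
  have hB := ((atTop_basis (α := ℕ)).comap (fun z : ℕ × ℕ => z.1)).inf
    ((Metric.nhds_basis_ball (x := (1 : ℝ))).comap
      (fun z : ℕ × ℕ => b * (z.2 : ℝ) ^ (1 - β) / (z.1 : ℝ)))
  obtain ⟨⟨s0, ε⟩, ⟨_, hε⟩, hi⟩ := hB.eventually_iff.1 h
  refine ⟨ε, hε, s0, fun s hs x hx => hi ?_⟩
  simp only [Set.mem_inter_iff, Set.mem_preimage, Set.mem_Ici, Metric.mem_ball, Real.dist_eq]
  exact ⟨hs, hx⟩

end local_part


section local_part2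

variable {b β : ℝ} {q : ℕ → ℝ}

lemma E0_lim (hb : 0 < b) (hβ0 : 0 ≤ β) (hβ1 : β < 1) (hb1 : β = 0 → b < 1)
    (hq : ∀ x : ℕ, q x = min 1 (b * (x : ℝ) ^ (-β))) (r : ℕ) :
    Tendsto (fun z : ℕ × ℕ => ((z.1 : ℝ) - ((z.2 - r : ℕ) : ℝ) * q z.2) /
      (((z.2 - r : ℕ) : ℝ) + 1)) (locF b β) (𝓝 0) := by
  obtain ⟨l, hl, hql, hqe⟩ := q_eventually hb hβ0 hb1 hq
  have hx := locF_snd (b := b) (β := β) hb hβ1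
  have a1 := hql.comp hx
  have a2 := ((ratio_lim r).comp hx).inv₀ one_ne_zero
  have a3 := (locF_v (b := b) (β := β)).inv₀ one_ne_zero
  have a4 : Tendsto (fun z : ℕ × ℕ => 1 / (((z.2 - r : ℕ) : ℝ) + 1)) (locF b β) (𝓝 0) :=
    (tendsto_one_div_add_atTop_nhds_zero_nat (𝕜 := ℝ)).comp ((tendsto_sub_atTop_nat r).comp hx)
  have a5 := ((a1.mul a2).mul a3).sub (a1.mul (a4.const_sub 1))
  simp only [inv_one, mul_one, sub_zero, sub_self] at a5
  apply a5.congr'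
  filter_upwards [hx.eventually hqe, hx.eventually (eventually_ge_atTop 1),
    locF_fst.eventually (eventually_ge_atTop 1)] with z h1 h2 h3
  have hx0 : (0 : ℝ) < z.2 := by exact_mod_cast h2
  have hs0 : (0 : ℝ) < z.1 := by exact_mod_cast h3
  simp only [Function.comp]
  rw [h1.1]
  have e : (z.2 : ℝ) ^ (1 - β) = z.2 * (z.2 : ℝ) ^ (-β) := by
    rw [sub_eq_add_neg, Real.rpow_add hx0, Real.rpow_one]
  rw [e]
  have hne : (z.2 : ℝ) ^ (-β) ≠ 0 := by positivity
  have hn : ((z.2 - r : ℕ) : ℝ) + 1 ≠ 0 := by positivity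
  field_simp
  ring

lemma E12_lim (hb : 0 < b) (hβ0 : 0 ≤ β) (hβ1 : β < 1) (hb1 : β = 0 → b < 1)
    (hq : ∀ x : ℕ, q x = min 1 (b * (x : ℝ) ^ (-β))) (r : ℕ) :
    Tendsto (fun z : ℕ × ℕ => (q z.2 - q (z.2 + 1)) *
      |(z.1 : ℝ) - ((z.2 - r : ℕ) : ℝ) * q z.2| / (q z.2 * (1 - q z.2))) (locF b β) (𝓝 0) ∧
    Tendsto (fun z : ℕ × ℕ => (q z.2 - q (z.2 + 1)) *
      (|(z.1 : ℝ) - ((z.2 - r : ℕ) : ℝ) * q z.2| + ((z.2 - r : ℕ) : ℝ) * (q z.2 - q (z.2 + 1)))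
      / (q (z.2 + 1) * (1 - q z.2))) (locF b β) (𝓝 0) := by
  obtain ⟨l, hl, hql, hqe⟩ := q_eventually hb hβ0 hb1 hq
  have hx := locF_snd (b := b) (β := β) hb hβ1
  have a1 := (E0_lim hb hβ0 hβ1 hb1 hq r).abs
  have th := (theta_lim hb hβ0 hb1 hq r).comp hx
  have qi := ((hql.comp hx).const_sub 1).inv₀ (by linarith : (1 : ℝ) - l ≠ 0)
  have hq' : Tendsto (fun x => q (x + 1)) atTop (𝓝 l) := (tendsto_add_atTop_iff_nat 1).2 hql
  have qd := (hql.sub hq').comp hx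
  have a4 : Tendsto (fun z : ℕ × ℕ => 1 / (((z.2 - r : ℕ) : ℝ) + 1)) (locF b β) (𝓝 0) :=
    (tendsto_one_div_add_atTop_nhds_zero_nat (𝕜 := ℝ)).comp ((tendsto_sub_atTop_nat r).comp hx)
  have qr := ((th.mul a4).const_sub 1).inv₀ (by simp)
  have c1 := (th.mul a1).mul qi
  have c2 := ((th.mul qr).mul (a1.add ((a4.const_sub 1).mul qd))).mul qi
  simp only [abs_zero, mul_zero, zero_mul, sub_self, add_zero] at c1 c2
  constructor
  · apply c1.congr'
    filter_upwards [hx.eventually hqe, hx.eventually (eventually_ge_atTop 1)] with z h1 h2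
    have hqp := q_pos hb hq h2
    have h1q : 0 < 1 - q z.2 := by linarith [h1.2]
    simp only [Function.comp]
    have hn : (0 : ℝ) < ((z.2 - r : ℕ) : ℝ) + 1 := by positivity
    rw [abs_div, abs_of_pos hn]
    field_simp
  · apply c2.congr'
    filter_upwards [hx.eventually hqe, hx.eventually (eventually_ge_atTop 1)] with z h1 h2
    have hqp := q_pos hb hq h2
    have hqp' := q_pos hb hq (show 1 ≤ z.2 + 1 by omega)
    have h1q : 0 < 1 - q z.2 := by linarith [h1.2]
    simp only [Function.comp]
    have hn : (0 : ℝ) < ((z.2 - r : ℕ) : ℝ) + 1 := by positivity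
    rw [abs_div, abs_of_pos hn]
    have e : (1 - (((z.2 - r : ℕ) : ℝ) + 1) * (q z.2 - q (z.2 + 1)) / q z.2 *
        (1 / (((z.2 - r : ℕ) : ℝ) + 1))) = q (z.2 + 1) / q z.2 := by
      field_simp; ring
    rw [e]
    field_simp
    ring

lemma W_lim (hb : 0 < b) (hβ0 : 0 ≤ β) (hβ1 : β < 1) (hb1 : β = 0 → b < 1)
    (hq : ∀ x : ℕ, q x = min 1 (b * (x : ℝ) ^ (-β))) (w : ℕ → ℝ) (A γ : ℝ)
    (hw : Tendsto (fun x : ℕ => w x * (x : ℝ) ^ γ) atTop (𝓝 A)) :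
    Tendsto (fun z : ℕ × ℕ => w z.2 * (z.1 : ℝ) ^ ((γ - β) / (1 - β)) / q z.2) (locF b β)
      (𝓝 (A * b ^ ((γ - β) / (1 - β) - 1))) := by
  obtain ⟨l, hl, hql, hqe⟩ := q_eventually hb hβ0 hb1 hq
  have hx := locF_snd (b := b) (β := β) hb hβ1
  set E := (γ - β) / (1 - β) with hE
  have hE' : (1 - β) * E = γ - β := by
    rw [hE]; field_simp [show (1 - β) ≠ 0 by linarith]
  have a1 := (locF_v (b := b) (β := β)).rpow_const (p := -E) (Or.inl one_ne_zero)
  have a2 := ((hw.comp hx).mul_const (b ^ (E - 1))).mul a1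
  simp only [Real.one_rpow, mul_one] at a2
  apply a2.congr'
  filter_upwards [hx.eventually hqe, hx.eventually (eventually_ge_atTop 1),
    locF_fst.eventually (eventually_ge_atTop 1)] with z h1 h2 h3
  have hx0 : (0 : ℝ) < z.2 := by exact_mod_cast h2
  have hs0 : (0 : ℝ) < z.1 := by exact_mod_cast h3
  simp only [Function.comp]
  rw [h1.1, Real.div_rpow (by positivity) hs0.le, Real.mul_rpow hb.le (by positivity),
    ← Real.rpow_mul hx0.le, show (1 - β) * -E = β - γ by linarith, Real.rpow_neg hb.le,
    Real.rpow_neg hs0.le, Real.rpow_sub hx0, Real.rpow_neg hx0.le, Real.rpow_sub hb, Real.rpow_one]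
  have p1 : (z.2 : ℝ) ^ β ≠ 0 := by positivity
  have p2 : (z.2 : ℝ) ^ γ ≠ 0 := by positivity
  have p3 : (z.1 : ℝ) ^ E ≠ 0 := by positivity
  have p4 : b ^ E ≠ 0 := by positivity
  field_simp

lemma loc_key (hb : 0 < b) (hβ0 : 0 ≤ β) (hβ1 : β < 1) (hb1 : β = 0 → b < 1)
    (hq : ∀ x : ℕ, q x = min 1 (b * (x : ℝ) ^ (-β))) (w : ℕ → ℝ) (hw0 : ∀ x, 0 ≤ w x) (A γ : ℝ)
    (hw : Tendsto (fun x : ℕ => w x * (x : ℝ) ^ γ) atTop (𝓝 A)) (r : ℕ) (η : ℝ) (hη : 0 < η) :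
    ∀ᶠ z in locF b β,
      0 ≤ binF z.1 (z.2 - r) (q z.2) - binF z.1 (z.2 + 1 - r) (q (z.2 + 1)) ∧
      w z.2 * binP (z.2 - r) (q z.2) z.1 * (z.1 : ℝ) ^ ((γ - β) / (1 - β)) ≤
       (A * b ^ ((γ - β) / (1 - β) - 1) / (1 - β) + η) *
        (binF z.1 (z.2 - r) (q z.2) - binF z.1 (z.2 + 1 - r) (q (z.2 + 1))) ∧
      (A * b ^ ((γ - β) / (1 - β) - 1) / (1 - β) - η) *
        (binF z.1 (z.2 - r) (q z.2) - binF z.1 (z.2 + 1 - r) (q (z.2 + 1))) ≤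
      w z.2 * binP (z.2 - r) (q z.2) z.1 * (z.1 : ℝ) ^ ((γ - β) / (1 - β)) := by
  obtain ⟨l, hl, hql, hqe⟩ := q_eventually hb hβ0 hb1 hq
  have hx := locF_snd (b := b) (β := β) hb hβ1
  have hW := W_lim hb hβ0 hβ1 hb1 hq w A γ hw
  obtain ⟨e1, e2⟩ := E12_lim hb hβ0 hβ1 hb1 hq r
  have th := (theta_lim hb hβ0 hb1 hq r).comp hx
  have f1 := (th.mul ((Real.continuous_exp.tendsto 0).comp e1)).const_sub 1
  have f2 := (th.mul ((Real.continuous_exp.tendsto 0).comp (by simpa using e2.neg))).const_sub 1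
  simp only [Real.exp_zero, mul_one] at f1 f2
  have hβ' : 1 - β ≠ 0 := by linarith
  have g1 := hW.div f1 hβ'
  have g2 := hW.div f2 hβ'
  have k1 := g1.eventually (gt_mem_nhds (lt_add_of_pos_right _ hη))
  have k2 := g2.eventually (lt_mem_nhds (sub_lt_self _ hη))
  have k3 := f1.eventually (lt_mem_nhds (show 0 < 1 - β by linarith))
  have k4 := f2.eventually (lt_mem_nhds (show 0 < 1 - β by linarith))
  filter_upwards [k1, k2, k3, k4, hx.eventually hqe, hx.eventually (eventually_ge_atTop (r + 1))]
    with z k1 k2 k3 k4 h1 h2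
  have hz1 : 1 ≤ z.2 := by omega
  have hqp := q_pos hb hq hz1
  have hqp' := q_pos hb hq (show 1 ≤ z.2 + 1 by omega)
  have hanti := q_anti hb hβ0 hq hz1
  have hnn : z.2 + 1 - r = (z.2 - r) + 1 := by omega
  rw [hnn]
  obtain ⟨d1, d2⟩ := D_bounds z.1 (z.2 - r) hanti hqp' h1.2
  set D := binF z.1 (z.2 - r) (q z.2) - binF z.1 (z.2 - r + 1) (q (z.2 + 1)) with hD
  have hB : 0 ≤ binP (z.2 - r) (q z.2) z.1 := binP_nonneg _ hqp.le h1.2.le _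
  set B := binP (z.2 - r) (q z.2) z.1 with hBdef
  simp only [Function.comp, Pi.div_apply] at k1 k2 k3 k4
  set P1 := 1 - (((z.2 - r : ℕ) : ℝ) + 1) * (q z.2 - q (z.2 + 1)) / q z.2 *
        Real.exp ((q z.2 - q (z.2 + 1)) * |(z.1 : ℝ) - ((z.2 - r : ℕ) : ℝ) * q z.2| /
          (q z.2 * (1 - q z.2))) with hP1
  set P2 := 1 - (((z.2 - r : ℕ) : ℝ) + 1) * (q z.2 - q (z.2 + 1)) / q z.2 *
        Real.exp (-((q z.2 - q (z.2 + 1)) * (|(z.1 : ℝ) - ((z.2 - r : ℕ) : ℝ) * q z.2| +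
          ((z.2 - r : ℕ) : ℝ) * (q z.2 - q (z.2 + 1))) /
          (q (z.2 + 1) * (1 - q z.2)))) with hP2
  have hD0 : 0 ≤ D := le_trans (by positivity) d1
  have hwz := hw0 z.2
  refine ⟨hD0, ?_, ?_⟩
  · calc w z.2 * B * (z.1 : ℝ) ^ ((γ - β) / (1 - β))
        = (w z.2 * (z.1 : ℝ) ^ ((γ - β) / (1 - β)) / q z.2 / P1) * (q z.2 * B * P1) := by
          field_simp
      _ ≤ (w z.2 * (z.1 : ℝ) ^ ((γ - β) / (1 - β)) / q z.2 / P1) * D := by gcongr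
      _ ≤ _ := by gcongr
  · calc (A * b ^ ((γ - β) / (1 - β) - 1) / (1 - β) - η) * D
       ≤ (w z.2 * (z.1 : ℝ) ^ ((γ - β) / (1 - β)) / q z.2 / P2) * D := by gcongr
     _ ≤ (w z.2 * (z.1 : ℝ) ^ ((γ - β) / (1 - β)) / q z.2 / P2) * (q z.2 * B * P2) := by gcongr
     _ = w z.2 * B * (z.1 : ℝ) ^ ((γ - β) / (1 - β)) := by
          field_simp

end local_part2


section local_part3

lemma summable_of_tail {w : ℕ → ℝ} {A γ : ℝ} (hγ : 1 < γ)
    (hw : Tendsto (fun x : ℕ => w x * (x : ℝ) ^ γ) atTop (𝓝 A)) : Summable w := by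
  have h1 : (fun x : ℕ => w x * (x : ℝ) ^ γ) =O[atTop] (fun _ => (1 : ℝ)) :=
    hw.isBigO_one ℝ
  have h2 := h1.mul (Asymptotics.isBigO_refl (fun x : ℕ => 1 / (x : ℝ) ^ γ) atTop)
  refine summable_of_isBigO_nat (Real.summable_one_div_nat_rpow.2 hγ)
    ((h2.congr' ?_ ?_))
  · filter_upwards [eventually_ge_atTop 1] with x hx
    have : (0 : ℝ) < x := by exact_mod_cast hx
    have : (x : ℝ) ^ γ ≠ 0 := by positivity
    field_simp
  · filter_upwards with x
    simp

lemma sum_Ico_tele (G : ℕ → ℝ) {m n : ℕ} (h : m ≤ n) :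
    ∑ x ∈ Finset.Ico m n, (G x - G (x + 1)) = G m - G n := by
  induction n, h using Nat.le_induction with
  | base => simp
  | succ n hmn ih => rw [Finset.sum_Ico_succ_top hmn, ih]; ring

lemma floor_seq {b β c : ℝ} (hb : 0 < b) (hβ1 : β < 1) (hc : 0 < c) :
    Tendsto (fun s : ℕ => b * (⌊(c * s / b) ^ ((1 - β)⁻¹)⌋₊ : ℝ) ^ (1 - β) / s) atTop (𝓝 c) := by
  have hβ' : 0 < 1 - β := by linarith
  have hy : Tendsto (fun s : ℕ => (c * s / b) ^ ((1 - β)⁻¹)) atTop atTop := by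
    apply (tendsto_rpow_atTop (inv_pos.2 hβ')).comp
    exact (tendsto_natCast_atTop_atTop.const_mul_atTop hc).atTop_div_const hb
  have h1 := ((tendsto_nat_floor_div_atTop (R := ℝ)).comp hy).rpow_const (p := 1 - β)
    (Or.inl one_ne_zero)
  have h2 := h1.const_mul c
  simp only [Real.one_rpow, mul_one] at h2
  apply h2.congr'
  filter_upwards [eventually_ge_atTop 1] with s hs
  have hs0 : (0 : ℝ) < s := by exact_mod_cast hs
  simp only [Function.comp]
  rw [Real.div_rpow (by positivity) (by positivity), ← Real.rpow_mul (by positivity),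
    inv_mul_cancel₀ hβ'.ne', Real.rpow_one]
  field_simp

lemma binF_le_one (s n : ℕ) {y : ℝ} (h0 : 0 ≤ y) (h1 : y ≤ 1) : binF s n y ≤ 1 :=
  binP_sum_le_one n h0 h1 _

lemma binF_nonneg (s n : ℕ) {y : ℝ} (h0 : 0 ≤ y) (h1 : y ≤ 1) : 0 ≤ binF s n y :=
  Finset.sum_nonneg fun k _ => binP_nonneg n h0 h1 k

lemma binF_upper (s n : ℕ) {y z : ℝ} (h0 : 0 ≤ y) (h1 : y ≤ 1) (hz : 0 < z)
    (h : s + z ≤ n * y) : binF s n y ≤ n * y / z ^ 2 := by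
  apply binP_cheb n h0 h1 _ hz
  intro k hk
  have : (k : ℝ) ≤ s := by
    have := Finset.mem_range.1 hk
    exact_mod_cast (by omega : k ≤ s)
  rw [abs_sub_comm]
  exact le_trans (by linarith) (le_abs_self _)

lemma binF_lower (s n : ℕ) {y z : ℝ} (h0 : 0 ≤ y) (h1 : y ≤ 1) (hz : 0 < z)
    (h : n * y + z ≤ s) : 1 - n * y / z ^ 2 ≤ binF s n y := by
  have h2 : ∑ k ∈ Finset.range (n + 1) \ Finset.range (s + 1), binP n y k ≤ n * y / z ^ 2 := by
    apply binP_cheb n h0 h1 _ hz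
    intro k hk
    have : (s : ℝ) ≤ k := by
      simp at hk
      exact_mod_cast (by omega : s ≤ k)
    exact le_trans (by linarith) (le_abs_self _)
  have h3 : ∑ k ∈ Finset.range (n + 1), binP n y k ≤
      ∑ k ∈ (Finset.range (n + 1) \ Finset.range (s + 1)) ∪ Finset.range (s + 1), binP n y k := by
    apply Finset.sum_le_sum_of_subset_of_nonneg
    · intro k hk
      simp at hk ⊢; omega
    · intro k _ _; exact binP_nonneg n h0 h1 k
  rw [binP_sum, Finset.sum_union Finset.sdiff_disjoint] at h3
  unfold binF
  linarith

variable {b β : ℝ} {q : ℕ → ℝ}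

lemma mean_le (hb : 0 < b) (_hβ1 : β < 1)
    (hq : ∀ x : ℕ, q x = min 1 (b * (x : ℝ) ^ (-β))) (r x : ℕ) :
    ((x - r : ℕ) : ℝ) * q x ≤ b * (x : ℝ) ^ (1 - β) := by
  rcases Nat.eq_zero_or_pos x with h | h
  · subst h; simp; positivity
  have hx0 : (0 : ℝ) < x := by exact_mod_cast h
  have h1 : ((x - r : ℕ) : ℝ) ≤ x := by exact_mod_cast Nat.sub_le x r
  have h2 : q x ≤ b * (x : ℝ) ^ (-β) := by rw [hq]; exact min_le_right _ _
  calc ((x - r : ℕ) : ℝ) * q x ≤ x * (b * (x : ℝ) ^ (-β)) := by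
        gcongr
        exact q_nonneg hb hq x
    _ = _ := by rw [sub_eq_add_neg, Real.rpow_add hx0, Real.rpow_one]; ring

lemma mean_ge (hb : 0 < b) (hβ0 : 0 ≤ β) (hb1 : β = 0 → b < 1)
    (hq : ∀ x : ℕ, q x = min 1 (b * (x : ℝ) ^ (-β))) (r : ℕ) :
    ∃ X0 : ℕ, ∀ x ≥ X0, b * (x : ℝ) ^ (1 - β) - r ≤ ((x - r : ℕ) : ℝ) * q x := by
  obtain ⟨l, hl, hql, hqe⟩ := q_eventually hb hβ0 hb1 hq
  obtain ⟨X, hX⟩ := eventually_atTop.1 hqe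
  refine ⟨max X (r + 1), fun x hx => ?_⟩
  have hxX : X ≤ x := le_trans (le_max_left _ _) hx
  have hxr : r + 1 ≤ x := le_trans (le_max_right _ _) hx
  have hx0 : (0 : ℝ) < x := by exact_mod_cast (by omega : 0 < x)
  obtain ⟨h1, h2⟩ := hX x hxX
  rw [Nat.cast_sub (by omega)]
  have e : b * (x : ℝ) ^ (1 - β) = x * q x := by
    rw [h1, sub_eq_add_neg, Real.rpow_add hx0, Real.rpow_one]; ring
  rw [e]
  have : (r : ℝ) * q x ≤ r * 1 := by gcongr
  linarith

lemma poly_exp_lim (E c : ℝ) (hc : 0 < c) :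
    Tendsto (fun s : ℕ => (s : ℝ) ^ E * Real.exp (-(c * s))) atTop (𝓝 0) := by
  have := (tendsto_rpow_mul_exp_neg_mul_atTop_nhds_zero E c hc).comp
    (tendsto_natCast_atTop_atTop (R := ℝ))
  apply this.congr
  intro s; simp [Function.comp]

lemma local_setup (hb : 0 < b) (hβ0 : 0 ≤ β) (hβ1 : β < 1) (hb1 : β = 0 → b < 1)
    (hq : ∀ x : ℕ, q x = min 1 (b * (x : ℝ) ^ (-β))) (r : ℕ) (ε : ℝ) (hε : 0 < ε) :
    ∃ lo hi : ℕ → ℕ, ∃ c > 0, (∀ᶠ s : ℕ in atTop, lo s ≤ hi s ∧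
      (∀ x ∈ Finset.Ico (lo s) (hi s), |b * (x : ℝ) ^ (1 - β) / (s : ℝ) - 1| < ε) ∧
      (∀ x ∉ Finset.Ico (lo s) (hi s), binP (x - r) (q x) s ≤ Real.exp (-(c * s)))) ∧
      Tendsto (fun s => binF s (lo s - r) (q (lo s)) - binF s (hi s - r) (q (hi s))) atTop (𝓝 1)
      := by
  have hβ' : 0 < 1 - β := by linarith
  set e := min (ε / 2) (1 / 2) with he
  have he0 : 0 < e := by positivity
  have he1 : e ≤ ε / 2 := min_le_left _ _
  have he2 : e ≤ 1 / 2 := min_le_right _ _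
  clear_value e
  set lo : ℕ → ℕ := fun s => ⌊((1 - e) * s / b) ^ ((1 - β)⁻¹)⌋₊ with hlo
  set hi : ℕ → ℕ := fun s => ⌊((1 + e) * s / b) ^ ((1 - β)⁻¹)⌋₊ with hhi
  have lim_lo : Tendsto (fun s : ℕ => b * (lo s : ℝ) ^ (1 - β) / s) atTop (𝓝 (1 - e)) :=
    floor_seq hb hβ1 (by linarith)
  have lim_hi : Tendsto (fun s : ℕ => b * (hi s : ℝ) ^ (1 - β) / s) atTop (𝓝 (1 + e)) :=
    floor_seq hb hβ1 (by linarith)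
  have hi_top : Tendsto hi atTop atTop := by
    apply tendsto_nat_floor_atTop.comp
    apply (tendsto_rpow_atTop (inv_pos.2 hβ')).comp
    exact (tendsto_natCast_atTop_atTop.const_mul_atTop (by linarith)).atTop_div_const hb
  have lo_le : ∀ s : ℕ, b * (lo s : ℝ) ^ (1 - β) ≤ (1 - e) * s := by
    intro s
    have h0 : 0 ≤ (1 - e) * s / b := div_nonneg (mul_nonneg (by linarith) (by positivity)) hb.le
    have h1 : (lo s : ℝ) ^ (1 - β) ≤ (((1 - e) * s / b) ^ ((1 - β)⁻¹)) ^ (1 - β) := by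
      apply Real.rpow_le_rpow (by positivity) _ hβ'.le
      exact Nat.floor_le (by positivity)
    rw [← Real.rpow_mul h0, inv_mul_cancel₀ hβ'.ne', Real.rpow_one, le_div_iff₀ hb] at h1
    linarith
  have mono : ∀ {x y : ℕ}, x ≤ y → b * (x : ℝ) ^ (1 - β) ≤ b * (y : ℝ) ^ (1 - β) := by
    intro x y hxy
    have : (x : ℝ) ≤ y := by exact_mod_cast hxy
    gcongr
  obtain ⟨X0, hX0⟩ := mean_ge hb hβ0 hb1 hq r
  -- uniform facts about means
  have off_lo : ∀ s x, x ≤ lo s → ((x - r : ℕ) : ℝ) * q x + e / 4 * s ≤ s := by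
    intro s x hx
    have h1 := mean_le hb hβ1 hq r x
    have h2 := mono hx
    have h3 := lo_le s
    have : 0 ≤ e * s := by positivity
    linarith
  have ev_hi : ∀ᶠ s : ℕ in atTop, ∀ x, hi s ≤ x → s + e / 4 * s ≤ ((x - r : ℕ) : ℝ) * q x := by
    have h4 : ∀ᶠ s : ℕ in atTop, (r : ℝ) ≤ e / 4 * s :=
      (tendsto_natCast_atTop_atTop.const_mul_atTop (by positivity : 0 < e / 4)).eventually_ge_atTop _
    filter_upwards [lim_hi.eventually (lt_mem_nhds (show 1 + e / 2 < 1 + e by linarith)),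
      hi_top.eventually_ge_atTop X0, h4, eventually_ge_atTop 1] with s h1 h2 h3 hs x hx
    have hs0 : (0 : ℝ) < s := by exact_mod_cast hs
    have h5 := hX0 x (h2.trans hx)
    have h6 := mono hx
    rw [lt_div_iff₀ hs0] at h1
    linarith
  have lohi : ∀ s, lo s ≤ hi s := by
    intro s
    apply Nat.floor_le_floor
    have : 0 ≤ (1 - e) * s / b := div_nonneg (mul_nonneg (by linarith) (by positivity)) hb.le
    gcongr
    · linarith
  refine ⟨lo, hi, (e / 4) ^ 2 / (4 * (1 + e / 4)), by positivity, ?_, ?_⟩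
  · filter_upwards [ev_hi, lim_lo.eventually (lt_mem_nhds (show 1 - ε < 1 - e by linarith)),
      lim_hi.eventually (gt_mem_nhds (show 1 + e < 1 + ε by linarith)), eventually_ge_atTop 1]
      with s h1 h2 h3 hs
    have hs0 : (0 : ℝ) < s := by exact_mod_cast hs
    refine ⟨lohi s, ?_, ?_⟩
    · intro x hx
      rw [Finset.mem_Ico] at hx
      have m1 := div_le_div_of_nonneg_right (mono hx.1) hs0.le
      have m2 := div_le_div_of_nonneg_right (mono hx.2.le) hs0.le
      rw [abs_lt]; constructor <;> linarith
    · intro x hx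
      have hz : 0 < e / 4 * (s : ℝ) := by positivity
      have key : e / 4 * (s : ℝ) ≤ |(s : ℝ) - ((x - r : ℕ) : ℝ) * q x| := by
        rcases lt_or_ge x (lo s) with h | h
        · have := off_lo s x h.le
          exact le_trans (by linarith) (le_abs_self _)
        · have hxhi : hi s ≤ x := by
            simp only [Finset.mem_Ico, not_and, not_lt] at hx; exact hx h
          have := h1 x hxhi
          exact le_trans (by linarith) (neg_le_abs _)
      refine (binP_chernoff _ (q_nonneg hb hq x) (q_le_one hq x) s hz key).trans_eq ?_
      congr 2
      field_simp
  · have c1 : Tendsto (fun s : ℕ => 2 / (e / 4) ^ 2 * (s : ℝ)⁻¹) atTop (𝓝 0) := by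
      simpa using (tendsto_inv_atTop_nhds_zero_nat (𝕜 := ℝ)).const_mul (2 / (e / 4) ^ 2)
    have t1 : Tendsto (fun s => binF s (lo s - r) (q (lo s))) atTop (𝓝 1) := by
      have l1 : Tendsto (fun s : ℕ => 1 - 2 / (e / 4) ^ 2 * (s : ℝ)⁻¹) atTop (𝓝 1) := by
        simpa using c1.const_sub 1
      refine tendsto_of_tendsto_of_tendsto_of_le_of_le' l1 tendsto_const_nhds ?_ ?_
      · filter_upwards [eventually_ge_atTop 1] with s hs
        have hs0 : (0 : ℝ) < s := by exact_mod_cast hs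
        have h := off_lo s (lo s) le_rfl
        refine le_trans ?_ (binF_lower s _ (q_nonneg hb hq _) (q_le_one hq _)
          (by positivity : 0 < e / 4 * (s : ℝ)) h)
        have h5 : ((lo s - r : ℕ) : ℝ) * q (lo s) ≤ 2 * s := by
          have : 0 ≤ e / 4 * (s : ℝ) := by positivity
          linarith
        have : ((lo s - r : ℕ) : ℝ) * q (lo s) / (e / 4 * s) ^ 2 ≤ 2 * s / (e / 4 * s) ^ 2 := by
          gcongr
        have e3 : 2 * (s : ℝ) / (e / 4 * s) ^ 2 = 2 / (e / 4) ^ 2 * (s : ℝ)⁻¹ := by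
          field_simp
        linarith
      · filter_upwards with s
        exact binF_le_one _ _ (q_nonneg hb hq _) (q_le_one hq _)
    have t2 : Tendsto (fun s => binF s (hi s - r) (q (hi s))) atTop (𝓝 0) := by
      refine tendsto_of_tendsto_of_tendsto_of_le_of_le' tendsto_const_nhds c1 ?_ ?_
      · filter_upwards with s
        exact binF_nonneg _ _ (q_nonneg hb hq _) (q_le_one hq _)
      · filter_upwards [ev_hi, lim_hi.eventually (gt_mem_nhds (show 1 + e < 2 by linarith)),
          eventually_ge_atTop 1] with s h1 h2 hs
        have hs0 : (0 : ℝ) < s := by exact_mod_cast hs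
        have h := h1 (hi s) le_rfl
        refine le_trans (binF_upper s _ (q_nonneg hb hq _) (q_le_one hq _)
          (by positivity : 0 < e / 4 * (s : ℝ)) h) ?_
        have h5 : ((hi s - r : ℕ) : ℝ) * q (hi s) ≤ 2 * s := by
          refine (mean_le hb hβ1 hq r _).trans ?_
          rw [div_lt_iff₀ hs0] at h2; exact h2.le
        have : ((hi s - r : ℕ) : ℝ) * q (hi s) / (e / 4 * s) ^ 2 ≤ 2 * s / (e / 4 * s) ^ 2 := by
          gcongr
        have e3 : 2 * (s : ℝ) / (e / 4 * s) ^ 2 = 2 / (e / 4) ^ 2 * (s : ℝ)⁻¹ := by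
          field_simp
        linarith
    simpa using t1.sub t2

lemma summable_mix {w : ℕ → ℝ} (hw0 : ∀ x, 0 ≤ w x) (hw : Summable w) {B : ℕ → ℝ}
    (h0 : ∀ x, 0 ≤ B x) (h1 : ∀ x, B x ≤ 1) : Summable (fun x => w x * B x) :=
  Summable.of_nonneg_of_le (fun x => mul_nonneg (hw0 x) (h0 x))
    (fun x => mul_le_of_le_one_right (hw0 x) (h1 x)) hw

lemma local_main (hb : 0 < b) (hβ0 : 0 ≤ β) (hβ1 : β < 1) (hb1 : β = 0 → b < 1)
    (hq : ∀ x : ℕ, q x = min 1 (b * (x : ℝ) ^ (-β))) (w : ℕ → ℝ) (hw0 : ∀ x, 0 ≤ w x) (A γ : ℝ)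
    (hγ : 1 < γ)
    (hw : Tendsto (fun x : ℕ => w x * (x : ℝ) ^ γ) atTop (𝓝 A)) (r : ℕ) :
    Tendsto (fun s : ℕ => (∑' x, w x * binP (x - r) (q x) s) * (s : ℝ) ^ ((γ - β) / (1 - β)))
      atTop (𝓝 (A * b ^ ((γ - β) / (1 - β) - 1) / (1 - β))) := by
  set E := (γ - β) / (1 - β) with hE
  set C := A * b ^ (E - 1) / (1 - β) with hC
  have hws := summable_of_tail hγ hw
  have hB0 : ∀ s x, 0 ≤ binP (x - r) (q x) s := fun s x =>
    binP_nonneg _ (q_nonneg hb hq x) (q_le_one hq x) s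
  have hB1 : ∀ s x, binP (x - r) (q x) s ≤ 1 := fun s x =>
    binP_le_one _ (q_nonneg hb hq x) (q_le_one hq x) s
  have hsum : ∀ s, Summable (fun x => w x * binP (x - r) (q x) s) := fun s =>
    summable_mix hw0 hws (hB0 s) (hB1 s)
  rw [tendsto_order]
  constructor
  · intro a ha
    obtain ⟨ε, hε, s0, hs0⟩ := locF_extract (loc_key hb hβ0 hβ1 hb1 hq w hw0 A γ hw r
      ((C - a) / 2) (by linarith))
    obtain ⟨lo, hi, c, hc, hev, hlim⟩ := local_setup hb hβ0 hβ1 hb1 hq r ε hε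
    have l1 := hlim.const_mul (C - (C - a) / 2)
    filter_upwards [hev, l1.eventually (lt_mem_nhds (show a < (C - (C - a) / 2) * 1 by linarith)),
      eventually_ge_atTop s0] with s h1 h2 h3
    refine h2.trans_le ?_
    rw [← sum_Ico_tele (fun x => binF s (x - r) (q x)) h1.1, Finset.mul_sum]
    calc _ ≤ ∑ x ∈ Finset.Ico (lo s) (hi s), w x * binP (x - r) (q x) s * (s : ℝ) ^ E := by
          apply Finset.sum_le_sum
          intro x hx
          exact (hs0 s h3 x (h1.2.1 x hx)).2.2
      _ = (∑ x ∈ Finset.Ico (lo s) (hi s), w x * binP (x - r) (q x) s) * (s : ℝ) ^ E := by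
          rw [Finset.sum_mul]
      _ ≤ _ := by
          gcongr
          exact (hsum s).sum_le_tsum _ (fun x _ => mul_nonneg (hw0 x) (hB0 s x))
  · intro a ha
    obtain ⟨ε, hε, s0, hs0⟩ := locF_extract (loc_key hb hβ0 hβ1 hb1 hq w hw0 A γ hw r
      ((a - C) / 2) (by linarith))
    obtain ⟨lo, hi, c, hc, hev, hlim⟩ := local_setup hb hβ0 hβ1 hb1 hq r ε hε
    have l1 := (hlim.const_mul (C + (a - C) / 2)).add
      ((poly_exp_lim E c hc).const_mul (∑' x, w x))
    filter_upwards [hev, l1.eventually (gt_mem_nhds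
      (show (C + (a - C) / 2) * 1 + (∑' x, w x) * 0 < a by linarith)),
      eventually_ge_atTop s0] with s h1 h2 h3
    refine lt_of_le_of_lt ?_ h2
    rw [← sum_Ico_tele (fun x => binF s (x - r) (q x)) h1.1, Finset.mul_sum]
    set I := Finset.Ico (lo s) (hi s) with hI
    have p1 : (∑' x, w x * binP (x - r) (q x) s) ≤
        ∑ x ∈ I, w x * binP (x - r) (q x) s + (∑' x, w x) * Real.exp (-(c * s)) := by
      have q1 : HasSum (fun x => if x ∈ I then w x * binP (x - r) (q x) s else 0)
          (∑ x ∈ I, w x * binP (x - r) (q x) s) := by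
        have := hasSum_sum_of_ne_finset_zero (L := SummationFilter.unconditional ℕ) (s := I)
          (f := fun x => if x ∈ I then w x * binP (x - r) (q x) s else 0)
          (fun x hx => by simp [hx])
        rwa [Finset.sum_congr rfl (fun x hx => if_pos hx)] at this
      refine hasSum_le (fun x => ?_) (hsum s).hasSum
        (q1.add (hws.hasSum.mul_right (Real.exp (-(c * s)))))
      by_cases hx : x ∈ I
      · have := hw0 x
        simp only [hx, if_true]
        have : 0 ≤ w x * Real.exp (-(c * s)) := by positivity
        linarith
      · simp only [hx, if_false, zero_add]
        exact mul_le_mul_of_nonneg_left (h1.2.2 x hx) (hw0 x)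
    calc _ ≤ (∑ x ∈ I, w x * binP (x - r) (q x) s + (∑' x, w x) * Real.exp (-(c * s)))
          * (s : ℝ) ^ E := by gcongr
      _ = ∑ x ∈ I, w x * binP (x - r) (q x) s * (s : ℝ) ^ E +
          (∑' x, w x) * ((s : ℝ) ^ E * Real.exp (-(c * s))) := by
          rw [add_mul, Finset.sum_mul]; ring
      _ ≤ _ := by
          refine add_le_add (Finset.sum_le_sum fun x hx => ?_) le_rfl
          exact (hs0 s h3 x (h1.2.1 x hx)).2.1

end local_part3



lemma half_conv (c : ℕ → ℕ → Prop) [∀ n i, Decidable (c n i)] (hc : ∀ n i, c n i → 2 * i ≤ n)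
    (hc' : ∀ i, ∀ᶠ n in atTop, c n i) {f u : ℕ → ℝ} (hf0 : ∀ i, 0 ≤ f i) (hf : Summable f)
    (hu0 : ∀ i, 0 ≤ u i) {κ U : ℝ} (hκ : 0 ≤ κ)
    (hu : Tendsto (fun n : ℕ => u n * (n : ℝ) ^ κ) atTop (𝓝 U)) :
    Tendsto (fun n : ℕ => (∑ i ∈ Finset.range (n + 1), if c n i then f i * u (n - i) else 0) *
      (n : ℝ) ^ κ) atTop (𝓝 ((∑' i, f i) * U)) := by
  obtain ⟨M, hM⟩ := hu.bddAbove_range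
  have hM' : ∀ m : ℕ, u m * (m : ℝ) ^ κ ≤ M := fun m => hM ⟨m, rfl⟩
  have key := tendsto_tsum_of_dominated_convergence (𝓕 := atTop)
    (f := fun n i => if c n i then f i * u (n - i) * (n : ℝ) ^ κ else 0)
    (g := fun i => f i * U) (bound := fun i => f i * (2 ^ κ * M)) (hf.mul_right _) ?_ ?_
  · rw [tsum_mul_right] at key
    refine key.congr fun n => ?_
    rw [tsum_eq_sum (s := Finset.range (n + 1)), Finset.sum_mul]
    · refine Finset.sum_congr rfl fun i _ => ?_
      split_ifs <;> simp
    · intro i hi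
      rw [if_neg]
      intro h
      have := hc n i h
      simp at hi
      omega
  · intro i
    have h1 : Tendsto (fun n : ℕ => u (n - i) * ((n - i : ℕ) : ℝ) ^ κ) atTop (𝓝 U) :=
      hu.comp (tendsto_sub_atTop_nat i)
    have h2 : Tendsto (fun n : ℕ => ((n : ℝ) / ((n - i : ℕ) : ℝ)) ^ κ) atTop (𝓝 1) := by
      have h3 : Tendsto (fun n : ℕ => ((n : ℝ) / ((n - i : ℕ) : ℝ))) atTop (𝓝 1) := by
        have h4 : Tendsto (fun n : ℕ => 1 + (i : ℝ) / ((n - i : ℕ) : ℝ)) atTop (𝓝 (1 + 0)) :=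
          tendsto_const_nhds.add (tendsto_const_nhds.div_atTop
            (tendsto_natCast_atTop_atTop.comp (tendsto_sub_atTop_nat i)))
        rw [add_zero] at h4
        refine h4.congr' ?_
        filter_upwards [eventually_gt_atTop i] with n hn
        have : (0 : ℝ) < ((n - i : ℕ) : ℝ) := by
          have : 0 < n - i := by omega
          exact_mod_cast this
        have e : (n : ℝ) = ((n - i : ℕ) : ℝ) + i := by
          have : n = (n - i) + i := by omega
          exact_mod_cast this
        rw [e]
        field_simp
      have := h3.rpow_const (p := κ) (Or.inl one_ne_zero)
      simpa using this
    have h3 := (h1.mul h2).const_mul (f i)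
    rw [mul_one] at h3
    refine h3.congr' ?_
    filter_upwards [hc' i, eventually_gt_atTop i] with n hn hn2
    have : (0 : ℝ) < ((n - i : ℕ) : ℝ) := by
      have : 0 < n - i := by omega
      exact_mod_cast this
    rw [if_pos hn, Real.div_rpow (by positivity) this.le]
    have := Real.rpow_pos_of_pos this κ
    field_simp
  · filter_upwards with n i
    have hMn : 0 ≤ 2 ^ κ * M := by
      have := hM' 0
      have h0 : 0 ≤ u 0 * ((0 : ℕ) : ℝ) ^ κ := mul_nonneg (hu0 0) (by positivity)
      have : 0 ≤ M := h0.trans this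
      positivity
    split_ifs with h
    · have h1 := hc n i h
      rw [Real.norm_of_nonneg (mul_nonneg (mul_nonneg (hf0 i) (hu0 _)) (by positivity)), mul_assoc]
      apply mul_le_mul_of_nonneg_left _ (hf0 i)
      have h2 : (n : ℝ) ^ κ ≤ 2 ^ κ * ((n - i : ℕ) : ℝ) ^ κ := by
        rw [← Real.mul_rpow (by norm_num) (by positivity)]
        apply Real.rpow_le_rpow (by positivity) _ hκ
        have : n ≤ 2 * (n - i) := by omega
        exact_mod_cast this
      calc u (n - i) * (n : ℝ) ^ κ ≤ u (n - i) * (2 ^ κ * ((n - i : ℕ) : ℝ) ^ κ) :=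
            mul_le_mul_of_nonneg_left h2 (hu0 _)
        _ = 2 ^ κ * (u (n - i) * ((n - i : ℕ) : ℝ) ^ κ) := by ring
        _ ≤ _ := mul_le_mul_of_nonneg_left (hM' _) (by positivity)
    · simpa using mul_nonneg (hf0 i) hMn

lemma conv_lim {f u : ℕ → ℝ} (hf0 : ∀ i, 0 ≤ f i) (hf : Summable f)
    (hu0 : ∀ i, 0 ≤ u i) (hus : Summable u) {κ U F : ℝ} (hκ : 0 ≤ κ)
    (hfl : Tendsto (fun n : ℕ => f n * (n : ℝ) ^ κ) atTop (𝓝 F))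
    (hu : Tendsto (fun n : ℕ => u n * (n : ℝ) ^ κ) atTop (𝓝 U)) :
    Tendsto (fun n : ℕ => conv f u n * (n : ℝ) ^ κ) atTop
      (𝓝 ((∑' i, f i) * U + (∑' i, u i) * F)) := by
  have h1 := half_conv (fun n i => 2 * i ≤ n) (fun n i h => h)
    (fun i => eventually_ge_atTop _) hf0 hf hu0 hκ hu
  have h2 := half_conv (fun n i => 2 * i < n) (fun n i h => h.le)
    (fun i => eventually_gt_atTop _) hu0 hus hf0 hκ hfl
  refine (h1.add h2).congr fun n => ?_
  rw [← add_mul]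
  congr 1
  rw [← Finset.sum_range_reflect (fun i => if 2 * i < n then u i * f (n - i) else 0),
    ← Finset.sum_add_distrib, conv]
  refine Finset.sum_congr rfl fun i hi => ?_
  have hi : i ≤ n := by simpa [Nat.lt_succ_iff] using hi
  have e1 : n + 1 - 1 - i = n - i := by omega
  have e2 : n - (n - i) = i := by omega
  rw [e1, e2]
  by_cases h : 2 * i ≤ n
  · rw [if_pos h, if_neg (by omega)]; ring
  · rw [if_neg h, if_pos (by omega)]; ring

lemma swap_hasSum {a : ℕ → ℕ → ℝ} (ha : ∀ j s, 0 ≤ a j s) {r : ℕ → ℝ} {R : ℝ}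
    (h1 : ∀ j, HasSum (a j) (r j)) (h2 : HasSum r R) :
    (∀ s, Summable (fun j => a j s)) ∧ HasSum (fun s => ∑' j, a j s) R := by
  have hS : Summable (fun x : ℕ × ℕ => a x.1 x.2) := by
    rw [summable_prod_of_nonneg (fun x => ha x.1 x.2)]
    refine ⟨fun j => (h1 j).summable, ?_⟩
    have : (fun j => ∑' s, a j s) = r := funext fun j => (h1 j).tsum_eq
    rw [this]; exact h2.summable
  have hR : HasSum (fun x : ℕ × ℕ => a x.1 x.2) R := by
    have e : R = ∑' x : ℕ × ℕ, a x.1 x.2 := by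
      exact h2.unique (hS.hasSum.prod_fiberwise (fun j => h1 j))
    rw [e]; exact hS.hasSum
  have hR' : HasSum (fun x : ℕ × ℕ => a x.2 x.1) R :=
    (Equiv.prodComm ℕ ℕ).hasSum_iff.2 hR
  have hs : ∀ s, Summable (fun j => a j s) := fun s => hR'.summable.prod_factor s
  exact ⟨hs, hR'.prod_fiberwise (fun s => (hs s).hasSum)⟩

lemma conv_nonneg {f g : ℕ → ℝ} (hf : ∀ i, 0 ≤ f i) (hg : ∀ i, 0 ≤ g i) (s : ℕ) :
    0 ≤ conv f g s := Finset.sum_nonneg fun i _ => mul_nonneg (hf _) (hg _)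

lemma conv_hasSum {f g : ℕ → ℝ} (hf : ∀ i, 0 ≤ f i) (hg : ∀ i, 0 ≤ g i) {A B : ℝ}
    (hA : HasSum f A) (hB : HasSum g B) : HasSum (conv f g) (A * B) := by
  have := hasSum_sum_range_mul_of_summable_norm (f := f) (g := g) hA.summable.norm hB.summable.norm
  rw [hA.tsum_eq, hB.tsum_eq] at this
  exact this

lemma convPow_nonneg {g : ℕ → ℝ} (hg : ∀ i, 0 ≤ g i) (j s : ℕ) : 0 ≤ convPow g j s := by
  induction j generalizing s with
  | zero => simp only [convPow]; split_ifs <;> norm_num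
  | succ j ih => exact conv_nonneg hg ih s

lemma convPow_hasSum {g : ℕ → ℝ} (hg : ∀ i, 0 ≤ g i) (hs : HasSum g 1) (j : ℕ) :
    HasSum (convPow g j) 1 := by
  induction j with
  | zero => exact hasSum_ite_eq 0 1
  | succ j ih => simpa [convPow] using conv_hasSum hg (convPow_nonneg hg j) hs ih

lemma conv_coeff (f g : ℕ → ℝ) (s : ℕ) :
    conv f g s = PowerSeries.coeff s (PowerSeries.mk f * PowerSeries.mk g) := by
  rw [PowerSeries.coeff_mul, Finset.Nat.sum_antidiagonal_eq_sum_range_succ_mk]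
  simp [conv]

lemma convPow_mk (g : ℕ → ℝ) (j : ℕ) :
    PowerSeries.mk (convPow g j) = (PowerSeries.mk g) ^ j := by
  induction j with
  | zero =>
    ext s
    simp [convPow, PowerSeries.coeff_one]
  | succ j ih =>
    rw [pow_succ', ← ih]
    ext s
    rw [← conv_coeff, PowerSeries.coeff_mk]; rfl

lemma mk_id_mul (g : ℕ → ℝ) :
    PowerSeries.mk (fun i : ℕ => (i : ℝ) * g i) =
      PowerSeries.X * PowerSeries.derivative ℝ (PowerSeries.mk g) := by
  ext s
  cases s with
  | zero => simp
  | succ s => simp [PowerSeries.coeff_succ_X_mul, PowerSeries.coeff_derivative, mul_comm]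

lemma convPow_panjer (g : ℕ → ℝ) (j n : ℕ) :
    (n : ℝ) * convPow g (j + 1) n =
      (j + 1) * conv (fun i : ℕ => (i : ℝ) * g i) (convPow g j) n := by
  rw [conv_coeff, convPow_mk, mk_id_mul]
  have h := mk_id_mul (convPow g (j + 1))
  have h2 := congrArg (PowerSeries.coeff n) h
  rw [PowerSeries.coeff_mk, convPow_mk] at h2
  rw [h2, PowerSeries.derivative_pow]
  have : PowerSeries.X * (((j + 1 : ℕ) : PowerSeries ℝ) * PowerSeries.mk g ^ (j + 1 - 1) *
      PowerSeries.derivative ℝ (PowerSeries.mk g)) = PowerSeries.C ((j : ℝ) + 1) *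
      (PowerSeries.X * PowerSeries.derivative ℝ (PowerSeries.mk g) * PowerSeries.mk g ^ j) := by
    simp
    ring
  rw [this, PowerSeries.coeff_C_mul]

lemma cpoi_facts {g : ℕ → ℝ} (hg : ∀ i, 0 ≤ g i) (hs : HasSum g 1) {lam : ℝ} (hl : 0 < lam) :
    (∀ s, 0 ≤ cpoi lam g s) ∧ HasSum (cpoi lam g) 1 ∧
    ∀ n : ℕ, (n : ℝ) * cpoi lam g n = lam * conv (fun i : ℕ => (i : ℝ) * g i) (cpoi lam g) n := by
  set w : ℕ → ℝ := fun j => Real.exp (-lam) * lam ^ j / (j.factorial : ℝ) with hw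
  have hw0 : ∀ j, 0 ≤ w j := fun j => by positivity
  have hws : HasSum w 1 := by
    have h := (NormedSpace.expSeries_div_hasSum_exp (𝔸 := ℝ) lam).mul_left (Real.exp (-lam))
    rw [← Real.exp_eq_exp_ℝ, ← Real.exp_add, neg_add_cancel, Real.exp_zero] at h
    refine h.congr_fun ?_ |> fun h => h
    intro j
    simp only [hw]; ring
  have hsw := swap_hasSum (a := fun j s => w j * convPow g j s)
    (fun j s => mul_nonneg (hw0 j) (convPow_nonneg hg j s))
    (fun j => (convPow_hasSum hg hs j).mul_left (w j)) (by simpa using hws)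
  refine ⟨fun s => tsum_nonneg fun j => mul_nonneg (hw0 j) (convPow_nonneg hg j s), hsw.2, ?_⟩
  intro n
  have e1 : (n : ℝ) * cpoi lam g n = ∑' j, (n : ℝ) * (w j * convPow g j n) := by
    rw [tsum_mul_left]; rfl
  rw [e1, ((hsw.1 n).mul_left (n : ℝ)).tsum_eq_zero_add]
  have e0 : (n : ℝ) * (w 0 * convPow g 0 n) = 0 := by
    simp only [convPow]
    split_ifs with h
    · simp [h]
    · simp
  rw [e0, zero_add]
  have e2 : ∀ j : ℕ, (n : ℝ) * (w (j + 1) * convPow g (j + 1) n) =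
      ∑ i ∈ Finset.range (n + 1), lam * ((i : ℝ) * g i) * (w j * convPow g j (n - i)) := by
    intro j
    have : w (j + 1) * (j + 1) = lam * w j := by
      simp only [hw, Nat.factorial_succ, pow_succ]
      push_cast
      field_simp
    calc (n : ℝ) * (w (j + 1) * convPow g (j + 1) n)
        = w (j + 1) * ((n : ℝ) * convPow g (j + 1) n) := by ring
      _ = (w (j + 1) * (j + 1)) * conv (fun i : ℕ => (i : ℝ) * g i) (convPow g j) n := by
          rw [convPow_panjer]; ring
      _ = _ := by
          rw [this, conv, Finset.mul_sum]
          exact Finset.sum_congr rfl fun i _ => by ring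
  simp_rw [e2]
  rw [Summable.tsum_finsetSum (fun i _ => (hsw.1 (n - i)).mul_left _), conv, Finset.mul_sum]
  refine Finset.sum_congr rfl fun i _ => ?_
  rw [tsum_mul_left, mul_assoc]
  rfl

lemma panjer_lim {f u : ℕ → ℝ} (hf0 : ∀ i, 0 ≤ f i) (hf : HasSum f 1)
    (hu0 : ∀ i, 0 ≤ u i) (hu00 : u 0 = 0) {lam κ c : ℝ} (hl : 0 < lam) (hκ : 1 < κ)
    (hu : Tendsto (fun n : ℕ => u n * (n : ℝ) ^ κ) atTop (𝓝 c))
    (hrec : ∀ n : ℕ, (n : ℝ) * f n = lam * conv u f n) :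
    Tendsto (fun n : ℕ => f n * (n : ℝ) ^ (1 + κ)) atTop (𝓝 (lam * c)) := by
  have hus : Summable u := summable_of_tail hκ hu
  obtain ⟨C, hC⟩ := hu.bddAbove_range
  have hC' : ∀ m : ℕ, u m * (m : ℝ) ^ κ ≤ C := fun m => hC ⟨m, rfl⟩
  have hC0 : 0 ≤ C := le_trans (mul_nonneg (hu0 0) (by positivity)) (hC' 0)
  set U := ∑' i, u i with hU
  have hU0 : 0 ≤ U := tsum_nonneg hu0
  obtain ⟨N, hN⟩ := exists_nat_gt (2 * (lam * U * 2 ^ (1 + κ)))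
  set M := (∑ n ∈ Finset.range (N + 1), f n * (n : ℝ) ^ (1 + κ)) + 2 * (lam * 2 ^ κ * C) with hM
  have hS0 : 0 ≤ ∑ n ∈ Finset.range (N + 1), f n * (n : ℝ) ^ (1 + κ) :=
    Finset.sum_nonneg fun i _ => mul_nonneg (hf0 i) (by positivity)
  have hM1 : 2 * (lam * 2 ^ κ * C) ≤ M := by rw [hM]; linarith
  have hM0 : 0 ≤ M := le_trans (by positivity) hM1
  have bound : ∀ n : ℕ, f n * (n : ℝ) ^ (1 + κ) ≤ M := by
    intro n
    induction n using Nat.strong_induction_on with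
    | _ n ih =>
    by_cases hnN : n ≤ N
    · have h1 := Finset.single_le_sum (f := fun n : ℕ => f n * (n : ℝ) ^ (1 + κ))
        (fun i _ => mul_nonneg (hf0 i) (by positivity)) (Finset.mem_range.2 (Nat.lt_succ_of_le hnN))
      have : 0 ≤ 2 * (lam * 2 ^ κ * C) := by positivity
      rw [hM]; linarith
    · have hn0 : (0 : ℝ) < n := by
        have : 0 < n := by omega
        exact_mod_cast this
      have hnN' : (N : ℝ) ≤ n := by
        have : N ≤ n := by omega
        exact_mod_cast this
      have term : ∀ i ∈ Finset.range (n + 1), u i * f (n - i) * (n : ℝ) ^ (1 + κ) ≤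
          u i * (2 ^ (1 + κ) * M) + n * (2 ^ κ * C) * f (n - i) := by
        intro i hi
        have hi : i ≤ n := by simpa [Nat.lt_succ_iff] using hi
        rcases Nat.eq_zero_or_pos i with h0 | h0
        · subst h0
          rw [hu00]
          have := hf0 (n - 0)
          simp only [zero_mul, zero_add]
          positivity
        by_cases h : 2 * i ≤ n
        · have h2 : (n : ℝ) ^ (1 + κ) ≤ 2 ^ (1 + κ) * ((n - i : ℕ) : ℝ) ^ (1 + κ) := by
            rw [← Real.mul_rpow (by norm_num) (by positivity)]
            apply Real.rpow_le_rpow (by positivity) _ (by linarith)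
            have : n ≤ 2 * (n - i) := by omega
            exact_mod_cast this
          have h3 := ih (n - i) (by omega)
          have h4 : f (n - i) * (n : ℝ) ^ (1 + κ) ≤ 2 ^ (1 + κ) * M := by
            calc _ ≤ f (n - i) * (2 ^ (1 + κ) * ((n - i : ℕ) : ℝ) ^ (1 + κ)) :=
                  mul_le_mul_of_nonneg_left h2 (hf0 _)
              _ = 2 ^ (1 + κ) * (f (n - i) * ((n - i : ℕ) : ℝ) ^ (1 + κ)) := by ring
              _ ≤ _ := mul_le_mul_of_nonneg_left h3 (by positivity)
          have h5 := mul_le_mul_of_nonneg_left h4 (hu0 i)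
          have h6 : 0 ≤ n * (2 ^ κ * C) * f (n - i) := mul_nonneg (by positivity) (hf0 _)
          linarith
        · have h2 : (n : ℝ) ^ κ ≤ 2 ^ κ * (i : ℝ) ^ κ := by
            rw [← Real.mul_rpow (by norm_num) (by positivity)]
            apply Real.rpow_le_rpow (by positivity) _ (by linarith)
            have : n ≤ 2 * i := by omega
            exact_mod_cast this
          have h4 : u i * (n : ℝ) ^ κ ≤ 2 ^ κ * C := by
            calc _ ≤ u i * (2 ^ κ * (i : ℝ) ^ κ) := mul_le_mul_of_nonneg_left h2 (hu0 _)
              _ = 2 ^ κ * (u i * (i : ℝ) ^ κ) := by ring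
              _ ≤ _ := mul_le_mul_of_nonneg_left (hC' i) (by positivity)
          have h5 := mul_le_mul_of_nonneg_left h4 (mul_nonneg hn0.le (hf0 (n - i)))
          have h6 : 0 ≤ u i * (2 ^ (1 + κ) * M) := mul_nonneg (hu0 _) (by positivity)
          rw [Real.rpow_add hn0, Real.rpow_one]
          nlinarith
      have h1 := Finset.sum_le_sum term
      rw [← Finset.sum_mul, Finset.sum_add_distrib, ← Finset.sum_mul, ← Finset.mul_sum] at h1
      have h2 : ∑ i ∈ Finset.range (n + 1), u i ≤ U := hus.sum_le_tsum _ (fun i _ => hu0 i)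
      have h3 : ∑ i ∈ Finset.range (n + 1), f (n - i) ≤ 1 := by
        have := Finset.sum_range_reflect f (n + 1)
        have e : ∑ i ∈ Finset.range (n + 1), f (n - i) = ∑ i ∈ Finset.range (n + 1), f i := by
          rw [← this]
          exact Finset.sum_congr rfl fun i _ => by congr 1
        rw [e, ← hf.tsum_eq]
        exact hf.summable.sum_le_tsum _ (fun i _ => hf0 i)
      have h4 : conv u f n * (n : ℝ) ^ (1 + κ) ≤ U * (2 ^ (1 + κ) * M) + n * (2 ^ κ * C) * 1 := by
        refine h1.trans (add_le_add ?_ ?_)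
        · exact mul_le_mul_of_nonneg_right h2 (by positivity)
        · exact mul_le_mul_of_nonneg_left h3 (by positivity)
      have h5 : (n : ℝ) * (f n * (n : ℝ) ^ (1 + κ)) ≤ n * M := by
        calc (n : ℝ) * (f n * (n : ℝ) ^ (1 + κ)) = lam * (conv u f n * (n : ℝ) ^ (1 + κ)) := by
              rw [← mul_assoc, hrec]; ring
          _ ≤ lam * (U * (2 ^ (1 + κ) * M) + n * (2 ^ κ * C) * 1) :=
              mul_le_mul_of_nonneg_left h4 hl.le
          _ = (2 * (lam * U * 2 ^ (1 + κ))) * (M / 2) + n * (2 * (lam * 2 ^ κ * C)) / 2 := by ring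
          _ ≤ n * (M / 2) + n * M / 2 := by
              have a1 := mul_le_mul_of_nonneg_right (hN.le.trans hnN')
                (show (0 : ℝ) ≤ M / 2 by linarith)
              have a2 := mul_le_mul_of_nonneg_left hM1 hn0.le
              linarith
          _ = n * M := by ring
      exact le_of_mul_le_mul_left h5 hn0
  have hf2 : Tendsto (fun n : ℕ => f n * (n : ℝ) ^ κ) atTop (𝓝 0) := by
    refine squeeze_zero' (Eventually.of_forall fun n => mul_nonneg (hf0 n) (by positivity))
      ?_ (tendsto_const_div_atTop_nhds_zero_nat M)
    filter_upwards [eventually_gt_atTop 0] with n hn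
    have hn0 : (0 : ℝ) < n := by exact_mod_cast hn
    rw [le_div_iff₀ hn0]
    have := bound n
    rw [Real.rpow_add hn0, Real.rpow_one] at this
    linarith
  have h := conv_lim hu0 hus hf0 hf.summable (by linarith) hu hf2
  rw [mul_zero, zero_add, hf.tsum_eq, one_mul] at h
  refine (h.const_mul lam).congr' ?_
  filter_upwards [eventually_gt_atTop 0] with n hn
  have hn0 : (0 : ℝ) < n := by exact_mod_cast hn
  rw [Real.rpow_add hn0, Real.rpow_one, ← mul_assoc, ← hrec]
  ring


lemma p_exists_pos {p : ℕ → ℝ} {a α : ℝ} (ha : 0 < a)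
    (hptail : Tendsto (fun x : ℕ => p x * (x : ℝ) ^ α) atTop (𝓝 a)) :
    ∃ x : ℕ, 2 ≤ x ∧ 0 < p x := by
  obtain ⟨x, h1, h2⟩ := ((hptail.eventually (lt_mem_nhds ha)).and (eventually_ge_atTop 2)).exists
  refine ⟨x, h2, ?_⟩
  exact pos_of_mul_pos_left h1 (by positivity)

lemma barf1_facts {mu a b α β : ℝ} (hmu : 0 < mu) (ha : 0 < a) (hb : 0 < b)
    (hα : 2 < α) (hβ0 : 0 ≤ β) (hβ1 : β < 1) (hαβ : 3 < α + β)
    (hb1 : β = 0 → b < 1)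
    {p : ℕ → ℝ} (hpnn : ∀ x, 0 ≤ p x)
    (hptail : Tendsto (fun x : ℕ => p x * (x : ℝ) ^ α) atTop (𝓝 a))
    {q : ℕ → ℝ} (hq : ∀ x : ℕ, q x = min 1 (b * (x : ℝ) ^ (-β))) :
    (∀ s, 0 ≤ barf1 mu p q s) ∧ HasSum (barf1 mu p q) 1 ∧
    Tendsto (fun s : ℕ => barf1 mu p q s * (s : ℝ) ^ (1 + (α - 2) / (1 - β))) atTop
      (𝓝 (mu * a * b ^ ((α - 2) / (1 - β)) / (1 - β))) := by
  set κ := (α - 2) / (1 - β) with hκdef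
  have hβ' : 0 < 1 - β := by linarith
  have hκ : 1 < κ := by rw [hκdef, one_lt_div hβ']; linarith
  set w : ℕ → ℝ := fun x => (x : ℝ) * p x with hw
  have hw0 : ∀ x, 0 ≤ w x := fun x => mul_nonneg (by positivity) (hpnn x)
  have hwl : Tendsto (fun x : ℕ => w x * (x : ℝ) ^ (α - 1)) atTop (𝓝 a) := by
    refine hptail.congr' ?_
    filter_upwards [eventually_gt_atTop 0] with x hx
    have hx0 : (0 : ℝ) < x := by exact_mod_cast hx
    have : (x : ℝ) ^ α = x * (x : ℝ) ^ (α - 1) := by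
      rw [← Real.rpow_one_add' hx0.le (by linarith)]; congr 1; ring
    rw [this]; simp only [hw]; ring
  have hws : Summable w := summable_of_tail (by linarith) hwl
  set P := mom p q 1 0 with hP
  have hPw : P = ∑' x, w x := by
    rw [hP, mom]; refine tsum_congr fun x => ?_
    simp [hw]
  have hP0 : 0 < P := by
    obtain ⟨x, hx2, hx⟩ := p_exists_pos ha hptail
    rw [hPw]
    refine hws.tsum_pos hw0 x (mul_pos ?_ hx)
    have : 0 < x := by omega
    exact_mod_cast this
  have hgeq : ∀ s, gInc p q s = ∑' x, w x / P * binP (x - 1) (q x) s := by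
    intro s
    rw [gInc, ← tsum_div_const]
    refine tsum_congr fun x => ?_
    simp only [hw, ← hP]; ring
  have hB0 : ∀ s x, 0 ≤ binP (x - 1) (q x) s := fun s x =>
    binP_nonneg _ (q_nonneg hb hq x) (q_le_one hq x) s
  have hterm : ∀ x s, 0 ≤ w x / P * binP (x - 1) (q x) s := fun x s =>
    mul_nonneg (div_nonneg (hw0 x) hP0.le) (hB0 s x)
  have hwP : HasSum (fun x => w x / P) 1 := by
    have := hws.hasSum.div_const P
    rwa [← hPw, div_self hP0.ne'] at this
  have hsw := swap_hasSum (a := fun x s => w x / P * binP (x - 1) (q x) s)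
    hterm (fun x => (binP_hasSum (x - 1) (q x)).mul_left (w x / P)) (by simpa using hwP)
  have hg1 : HasSum (gInc p q) 1 := by
    rw [funext hgeq]; exact hsw.2
  have hg0 : ∀ s, 0 ≤ gInc p q s := fun s => by
    rw [hgeq]; exact tsum_nonneg fun x => hterm x s
  have hgl := local_main hb hβ0 hβ1 hb1 hq w hw0 a (α - 1) (by linarith) hwl 1
  have eE : (α - 1 - β) / (1 - β) = 1 + κ := by
    rw [hκdef]; field_simp; ring
  rw [eE] at hgl
  have hgl2 : Tendsto (fun s : ℕ => ((s : ℝ) * gInc p q s) * (s : ℝ) ^ κ) atTop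
      (𝓝 (a * b ^ κ / (1 - β) / P)) := by
    have := hgl.div_const P
    rw [show 1 + κ - 1 = κ by ring] at this
    refine this.congr' ?_
    filter_upwards [eventually_gt_atTop 0] with s hs
    have hs0 : (0 : ℝ) < s := by exact_mod_cast hs
    rw [Real.rpow_add hs0, Real.rpow_one, gInc]
    have : (∑' x : ℕ, (x : ℝ) * binP (x - 1) (q x) s * p x) =
        ∑' x, w x * binP (x - 1) (q x) s := by
      refine tsum_congr fun x => ?_
      simp only [hw]; ring
    rw [this, ← hP]; ring
  obtain ⟨f0, f1, frec⟩ := cpoi_facts hg0 hg1 (mul_pos hmu hP0)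
  refine ⟨f0, f1, ?_⟩
  have := panjer_lim f0 f1 (u := fun i : ℕ => (i : ℝ) * gInc p q i)
    (fun i => mul_nonneg (by positivity) (hg0 i)) (by simp) (mul_pos hmu hP0) hκ hgl2 frec
  have e : mu * P * (a * b ^ κ / (1 - β) / P) = mu * a * b ^ κ / (1 - β) := by
    field_simp
  rw [e] at this
  exact this

/-- mixture weights for `f2p` -/
def wt2 (p q : ℕ → ℝ) (x : ℕ) : ℝ := (x.descFactorial 2 : ℝ) * q x * p x / mom p q 2 1

lemma wt2_facts {a b α β : ℝ} (ha : 0 < a) (hb : 0 < b)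
    (hβ0 : 0 ≤ β) (hβ1 : β < 1) (hαβ : 3 < α + β)
    (hb1 : β = 0 → b < 1)
    {p : ℕ → ℝ} (hpnn : ∀ x, 0 ≤ p x)
    (hptail : Tendsto (fun x : ℕ => p x * (x : ℝ) ^ α) atTop (𝓝 a))
    {q : ℕ → ℝ} (hq : ∀ x : ℕ, q x = min 1 (b * (x : ℝ) ^ (-β))) :
    (∀ x, 0 ≤ wt2 p q x) ∧ HasSum (wt2 p q) 1 ∧ 0 < mom p q 2 1 ∧
    (∀ s t, f2p p q s t =
      ∑' x, wt2 p q x * (binP (x - 2) (q x) s * binP (x - 2) (q x) t)) ∧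
    Tendsto (fun s : ℕ => (∑' x, wt2 p q x * binP (x - 2) (q x) s) *
      (s : ℝ) ^ ((α - 2) / (1 - β))) atTop
      (𝓝 (a * b ^ ((α - 2) / (1 - β)) / (1 - β) / mom p q 2 1)) := by
  set κ := (α - 2) / (1 - β) with hκdef
  set w : ℕ → ℝ := fun x => (x.descFactorial 2 : ℝ) * q x * p x with hw
  have hw0 : ∀ x, 0 ≤ w x := fun x =>
    mul_nonneg (mul_nonneg (by positivity) (q_nonneg hb hq x)) (hpnn x)
  have hwl : Tendsto (fun x : ℕ => w x * (x : ℝ) ^ (α + β - 2)) atTop (𝓝 (a * b)) := by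
    obtain ⟨l, -, -, hqe⟩ := q_eventually hb hβ0 hb1 hq
    have h1 : Tendsto (fun x : ℕ => 1 - (1 : ℝ) / x) atTop (𝓝 (1 - 0)) :=
      tendsto_const_nhds.sub (tendsto_const_div_atTop_nhds_zero_nat 1)
    have h2 := (hptail.mul h1).mul_const b
    rw [sub_zero, mul_one] at h2
    refine h2.congr' ?_
    filter_upwards [hqe, eventually_gt_atTop 1] with x hx hx1
    have hx0 : (0 : ℝ) < x := by
      have : 0 < x := by omega
      exact_mod_cast this
    have hd : (x.descFactorial 2 : ℝ) = x * (x - 1) := by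
      rw [Nat.descFactorial_succ, Nat.descFactorial_one, Nat.cast_mul, Nat.cast_sub hx1.le]
      push_cast; ring
    simp only [hw]
    rw [hx.1, hd]
    have e : (x : ℝ) ^ α = (x : ℝ) ^ (-β) * (x : ℝ) ^ (α + β - 2) * (x * x) := by
      rw [← Real.rpow_add hx0, ← pow_two, ← Real.rpow_natCast, ← Real.rpow_add hx0]
      congr 1; push_cast; ring
    rw [e]; field_simp
  have hws : Summable w := summable_of_tail (by linarith) hwl
  set P := mom p q 2 1 with hP
  have hPw : P = ∑' x, w x := by
    rw [hP, mom]; refine tsum_congr fun x => ?_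
    simp [hw]
  have hP0 : 0 < P := by
    obtain ⟨x, hx2, hx⟩ := p_exists_pos ha hptail
    rw [hPw]
    refine hws.tsum_pos hw0 x (mul_pos (mul_pos ?_ (q_pos hb hq (by omega))) hx)
    have : 0 < x.descFactorial 2 := Nat.descFactorial_pos.2 hx2
    exact_mod_cast this
  have hwt : ∀ x, wt2 p q x = w x / P := fun x => rfl
  refine ⟨fun x => ?_, ?_, hP0, ?_, ?_⟩
  · rw [hwt]; exact div_nonneg (hw0 x) hP0.le
  · have := hws.hasSum.div_const P
    rw [← hPw, div_self hP0.ne'] at this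
    exact this
  · intro s t
    rw [f2p, ← tsum_div_const]
    refine tsum_congr fun x => ?_
    rw [hwt]; simp only [hw, ← hP]; ring
  · have h := local_main hb hβ0 hβ1 hb1 hq w hw0 (a * b) (α + β - 2) (by linarith) hwl 2
    have eE : (α + β - 2 - β) / (1 - β) = κ := by
      rw [hκdef]; congr 1; ring
    rw [eE] at h
    have e2 : a * b * b ^ (κ - 1) = a * b ^ κ := by
      rw [Real.rpow_sub_one hb.ne']; field_simp
    rw [e2] at h
    refine (h.div_const P).congr fun s => ?_
    rw [mul_div_right_comm, ← tsum_div_const]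
    congr 1
    refine tsum_congr fun x => ?_
    rw [hwt]; ring


section mix
variable {w : ℕ → ℝ} {N : ℕ → ℕ} {y : ℕ → ℝ}

lemma mix_swap (hw0 : ∀ x, 0 ≤ w x) (hw : HasSum w 1) (hy0 : ∀ x, 0 ≤ y x) (hy1 : ∀ x, y x ≤ 1)
    (s : ℕ) (A : Finset ℕ) :
    Summable (fun x => w x * (binP (N x) (y x) s * ∑ t ∈ A, binP (N x) (y x) t)) ∧
    ∑ t ∈ A, (∑' x, w x * (binP (N x) (y x) s * binP (N x) (y x) t)) =
      ∑' x, w x * (binP (N x) (y x) s * ∑ t ∈ A, binP (N x) (y x) t) := by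
  have hB0 : ∀ x t, 0 ≤ binP (N x) (y x) t := fun x t => binP_nonneg _ (hy0 x) (hy1 x) t
  have hB1 : ∀ x t, binP (N x) (y x) t ≤ 1 := fun x t => binP_le_one _ (hy0 x) (hy1 x) t
  constructor
  · refine summable_mix hw0 hw.summable
      (fun x => mul_nonneg (hB0 x s) (Finset.sum_nonneg fun t _ => hB0 x t)) (fun x => ?_)
    exact mul_le_one₀ (hB1 x s) (Finset.sum_nonneg fun t _ => hB0 x t)
      (binP_sum_le_one _ (hy0 x) (hy1 x) A)
  · rw [← Summable.tsum_finsetSum]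
    · refine tsum_congr fun x => ?_
      rw [Finset.mul_sum, Finset.mul_sum]
    · intro t _
      exact summable_mix hw0 hw.summable (fun x => mul_nonneg (hB0 x s) (hB0 x t))
        (fun x => mul_le_one₀ (hB1 x s) (hB0 x t) (hB1 x t))

lemma mix_sum_le (hw0 : ∀ x, 0 ≤ w x) (hw : HasSum w 1) (hy0 : ∀ x, 0 ≤ y x)
    (hy1 : ∀ x, y x ≤ 1) (s : ℕ) (A : Finset ℕ) :
    ∑ t ∈ A, (∑' x, w x * (binP (N x) (y x) s * binP (N x) (y x) t)) ≤
      ∑' x, w x * binP (N x) (y x) s := by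
  obtain ⟨h1, h2⟩ := mix_swap (N := N) hw0 hw hy0 hy1 s A
  rw [h2]
  refine h1.tsum_le_tsum (fun x => ?_) (summable_mix hw0 hw.summable
    (fun x => binP_nonneg _ (hy0 x) (hy1 x) s) (fun x => binP_le_one _ (hy0 x) (hy1 x) s))
  exact mul_le_mul_of_nonneg_left (mul_le_of_le_one_right (binP_nonneg _ (hy0 x) (hy1 x) s)
    (binP_sum_le_one _ (hy0 x) (hy1 x) A)) (hw0 x)

lemma cher_half (n : ℕ) {v : ℝ} (h0 : 0 ≤ v) (h1 : v ≤ 1) (s : ℕ) {d M : ℝ} (hd : 0 < d)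
    (hs : (s : ℝ) ≤ M) (h : d / 2 ≤ |(s : ℝ) - n * v|) :
    binP n v s ≤ Real.exp (-(d ^ 2 / (16 * M + 8 * d))) := by
  refine (binP_chernoff n h0 h1 s (by positivity) h).trans ?_
  have hs0 : (0 : ℝ) ≤ s := by positivity
  apply Real.exp_le_exp.2
  apply neg_le_neg
  have e : (d / 2) ^ 2 / (4 * ((s : ℝ) + d / 2)) = d ^ 2 / (16 * s + 8 * d) := by
    rw [div_eq_div_iff (by positivity) (by positivity)]; ring
  rw [e]
  apply div_le_div_of_nonneg_left (by positivity) (by positivity)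
  linarith

lemma mix_far (hw0 : ∀ x, 0 ≤ w x) (hw : HasSum w 1) (hy0 : ∀ x, 0 ≤ y x)
    (hy1 : ∀ x, y x ≤ 1) (s t : ℕ) {d M : ℝ} (hd : 0 < d) (hs : (s : ℝ) ≤ M) (ht : (t : ℝ) ≤ M)
    (h : d ≤ |(s : ℝ) - t|) :
    (∑' x, w x * (binP (N x) (y x) s * binP (N x) (y x) t)) ≤
      Real.exp (-(d ^ 2 / (16 * M + 8 * d))) := by
  set e := Real.exp (-(d ^ 2 / (16 * M + 8 * d))) with he
  have hB0 : ∀ x t, 0 ≤ binP (N x) (y x) t := fun x t => binP_nonneg _ (hy0 x) (hy1 x) t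
  have hB1 : ∀ x t, binP (N x) (y x) t ≤ 1 := fun x t => binP_le_one _ (hy0 x) (hy1 x) t
  have h2 : HasSum (fun x => w x * e) e := by simpa using hw.mul_right e
  rw [← h2.tsum_eq]
  refine (summable_mix hw0 hw.summable (fun x => mul_nonneg (hB0 x s) (hB0 x t))
        (fun x => mul_le_one₀ (hB1 x s) (hB0 x t) (hB1 x t))).tsum_le_tsum (fun x => ?_) h2.summable
  apply mul_le_mul_of_nonneg_left _ (hw0 x)
  by_cases hc : d / 2 ≤ |(s : ℝ) - N x * y x|
  · exact (mul_le_of_le_one_right (hB0 x s) (hB1 x t)).trans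
      (cher_half _ (hy0 x) (hy1 x) s hd hs hc)
  · have hc2 : d / 2 ≤ |(t : ℝ) - N x * y x| := by
      push Not at hc
      have := abs_sub_le (s : ℝ) (N x * y x) t
      rw [abs_sub_comm (N x * y x : ℝ) (t : ℝ)] at this
      linarith
    exact (mul_le_of_le_one_left (hB0 x t) (hB1 x s)).trans
      (cher_half _ (hy0 x) (hy1 x) t hd ht hc2)

lemma mix_lower (hw0 : ∀ x, 0 ≤ w x) (hw : HasSum w 1) (hy0 : ∀ x, 0 ≤ y x)
    (hy1 : ∀ x, y x ≤ 1) (s : ℕ) {d M : ℝ} (hd : 0 < d) (hs : (s : ℝ) ≤ M)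
    (A : Finset ℕ) (hA : ∀ t : ℕ, |(t : ℝ) - s| ≤ d → t ∈ A) :
    (1 - 4 * (M + d / 2) / d ^ 2) * (∑' x, w x * binP (N x) (y x) s) -
      Real.exp (-(d ^ 2 / (16 * M + 8 * d))) ≤
    ∑ t ∈ A, (∑' x, w x * (binP (N x) (y x) s * binP (N x) (y x) t)) := by
  set e := Real.exp (-(d ^ 2 / (16 * M + 8 * d))) with he
  set ρ := 4 * (M + d / 2) / d ^ 2 with hρ
  have hM0 : 0 ≤ M := le_trans (by positivity) hs
  have hρ0 : 0 ≤ ρ := by positivity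
  have hB0 : ∀ x t, 0 ≤ binP (N x) (y x) t := fun x t => binP_nonneg _ (hy0 x) (hy1 x) t
  have hB1 : ∀ x t, binP (N x) (y x) t ≤ 1 := fun x t => binP_le_one _ (hy0 x) (hy1 x) t
  have h2 : HasSum (fun x => w x * e) e := by simpa using hw.mul_right e
  obtain ⟨h3, h4⟩ := mix_swap (N := N) hw0 hw hy0 hy1 s A
  have h5 : Summable (fun x => w x * binP (N x) (y x) s) :=
    summable_mix hw0 hw.summable (fun x => hB0 x s) (fun x => hB1 x s)
  rw [h4, ← h2.tsum_eq, ← tsum_mul_left, ← (h5.mul_left _).tsum_sub h2.summable]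
  refine ((h5.mul_left _).sub h2.summable).tsum_le_tsum (fun x => ?_) h3
  have key : (1 - ρ) * binP (N x) (y x) s - e ≤
      binP (N x) (y x) s * ∑ t ∈ A, binP (N x) (y x) t := by
    have hSA : 0 ≤ ∑ t ∈ A, binP (N x) (y x) t := Finset.sum_nonneg fun t _ => hB0 x t
    by_cases hc : d / 2 ≤ |(s : ℝ) - N x * y x|
    · have := cher_half _ (hy0 x) (hy1 x) s hd hs hc
      have a1 := mul_nonneg (hB0 x s) hSA
      have a2 := mul_nonneg hρ0 (hB0 x s)
      rw [← he] at this
      linarith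
    · push Not at hc
      have hcc := abs_lt.1 hc
      have hch := binP_cheb (N x) (hy0 x) (hy1 x) (Finset.range (N x + 1) \ A)
        (z := d / 2) (by positivity) (by
          intro k hk
          by_contra hk2
          push Not at hk2
          apply (Finset.mem_sdiff.1 hk).2
          apply hA
          have := abs_sub_le (k : ℝ) (N x * y x) s
          rw [abs_sub_comm (N x * y x : ℝ) (s : ℝ)] at this
          linarith)
      have h6 : (N x : ℝ) * y x / (d / 2) ^ 2 ≤ ρ := by
        have : (N x : ℝ) * y x / (d / 2) ^ 2 = 4 * (N x * y x) / d ^ 2 := by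
          field_simp; ring
        rw [this, hρ]
        apply div_le_div_of_nonneg_right _ (by positivity)
        linarith [hcc.1]
      have h7 : 1 ≤ ∑ t ∈ A, binP (N x) (y x) t +
          ∑ t ∈ Finset.range (N x + 1) \ A, binP (N x) (y x) t := by
        rw [← binP_sum (N x) (y x), ← Finset.sum_union Finset.disjoint_sdiff]
        apply Finset.sum_le_sum_of_subset_of_nonneg
        · intro t ht
          simp only [Finset.mem_union, Finset.mem_sdiff]
          tauto
        · intro t _ _; exact hB0 x t
      have h8 : 1 - ρ ≤ ∑ t ∈ A, binP (N x) (y x) t := by linarith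
      have h9 := mul_le_mul_of_nonneg_left h8 (hB0 x s)
      have : 0 < e := Real.exp_pos _
      linarith
  have := mul_le_mul_of_nonneg_left key (hw0 x)
  linarith
end mix

/-- the double sum -/
def dblS (f : ℕ → ℝ) (F : ℕ → ℕ → ℝ) (n1 n2 : ℕ) : ℝ :=
  ∑ i ∈ Finset.range (n1 + 1), ∑ j ∈ Finset.range (n2 + 1), f i * f j * F (n1 - i) (n2 - j)

lemma delta_conv (G : ℕ → ℕ → ℝ) (s t : ℕ) :
    conv2 delta11 G (s + 1) (t + 1) = G s t := by
  rw [conv2, Finset.sum_eq_single 1, Finset.sum_eq_single 1]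
  · simp [delta11]
  · intro j _ hj; simp [delta11, hj]
  · intro h; simp at h
  · intro i _ hi; simp [delta11, hi]
  · intro h; simp at h

lemma delta_conv_zero (G : ℕ → ℕ → ℝ) (s t : ℕ) (h : s = 0 ∨ t = 0) :
    conv2 delta11 G s t = 0 := by
  rw [conv2]
  refine Finset.sum_eq_zero fun i hi => Finset.sum_eq_zero fun j hj => ?_
  have : ¬ (i = 1 ∧ j = 1) := by
    simp at hi hj; omega
  simp [delta11, this]

lemma barf2_eq (mu : ℝ) (p q : ℕ → ℝ) (n1 n2 : ℕ) :
    barf2 mu p q (n1 + 1) (n2 + 1) = dblS (barf1 mu p q) (f2p p q) n1 n2 := by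
  rw [barf2, conv2, Finset.sum_range_succ', dblS]
  rw [Finset.sum_eq_zero (s := Finset.range (n2 + 1 + 1)) (fun j _ => by
    rw [delta_conv_zero _ _ _ (Or.inl rfl), zero_mul]), add_zero]
  refine Finset.sum_congr rfl fun i _ => ?_
  rw [Finset.sum_range_succ', delta_conv_zero _ _ _ (Or.inr rfl), zero_mul, add_zero]
  refine Finset.sum_congr rfl fun j _ => ?_
  rw [delta_conv, Nat.add_sub_add_right, Nat.add_sub_add_right]

lemma dbl_upper {f h : ℕ → ℝ} {F : ℕ → ℕ → ℝ} (hf0 : ∀ i, 0 ≤ f i) (hf1 : ∀ i, f i ≤ 1)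
    (hF0 : ∀ s t, 0 ≤ F s t) (n1 n2 : ℕ) (h12 : n1 ≤ n2)
    (hFh : ∀ s (A : Finset ℕ), ∑ t ∈ A, F s t ≤ h s) {d e Φ : ℝ} (he : 0 ≤ e) (hΦ0 : 0 ≤ Φ)
    (hfar : ∀ s t : ℕ, s ≤ n2 → t ≤ n2 → d ≤ |(s : ℝ) - t| → F s t ≤ e)
    (hΦ : ∀ j : ℕ, (n2 : ℝ) - n1 - d ≤ j → f j ≤ Φ) :
    dblS f F n1 n2 ≤ Φ * conv f h n1 + (n1 + 1) * (n2 + 1) * e := by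
  have term : ∀ i ∈ Finset.range (n1 + 1), ∀ j ∈ Finset.range (n2 + 1),
      f i * f j * F (n1 - i) (n2 - j) ≤ f i * Φ * F (n1 - i) (n2 - j) + e := by
    intro i hi j hj
    have hi : i ≤ n1 := by simpa [Nat.lt_succ_iff] using hi
    have hj : j ≤ n2 := by simpa [Nat.lt_succ_iff] using hj
    have hF := hF0 (n1 - i) (n2 - j)
    by_cases hc : d ≤ |((n1 - i : ℕ) : ℝ) - ((n2 - j : ℕ) : ℝ)|
    · have h1 := hfar (n1 - i) (n2 - j) (by omega) (by omega) hc
      have h2 : f i * f j ≤ 1 := mul_le_one₀ (hf1 i) (hf0 j) (hf1 j)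
      have h3 := mul_le_mul_of_nonneg_right h2 hF
      have h4 := mul_nonneg (mul_nonneg (hf0 i) hΦ0) hF
      linarith
    · push Not at hc
      have hc2 := (abs_lt.1 hc).1
      rw [Nat.cast_sub hi, Nat.cast_sub hj] at hc2
      have hi0 : (0 : ℝ) ≤ i := by positivity
      have h1 := hΦ j (by linarith)
      have h2 := mul_le_mul_of_nonneg_right (mul_le_mul_of_nonneg_left h1 (hf0 i)) hF
      linarith
  calc dblS f F n1 n2 ≤ ∑ i ∈ Finset.range (n1 + 1), ∑ j ∈ Finset.range (n2 + 1),
        (f i * Φ * F (n1 - i) (n2 - j) + e) :=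
        Finset.sum_le_sum fun i hi => Finset.sum_le_sum fun j hj => term i hi j hj
    _ ≤ ∑ i ∈ Finset.range (n1 + 1), (Φ * (f i * h (n1 - i)) + (n2 + 1) * e) := by
        refine Finset.sum_le_sum fun i _ => ?_
        rw [Finset.sum_add_distrib, ← Finset.mul_sum]
        have h1 : ∑ j ∈ Finset.range (n2 + 1), F (n1 - i) (n2 - j) ≤ h (n1 - i) := by
          have := Finset.sum_range_reflect (F (n1 - i)) (n2 + 1)
          have h2 := hFh (n1 - i) (Finset.range (n2 + 1))
          rw [← this] at h2
          exact h2
        have h2 := mul_le_mul_of_nonneg_left h1 (mul_nonneg (hf0 i) hΦ0)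
        simp only [Finset.sum_const, Finset.card_range, nsmul_eq_mul]
        push_cast
        linarith
    _ = _ := by
        rw [Finset.sum_add_distrib, ← Finset.mul_sum, conv]
        simp only [Finset.sum_const, Finset.card_range, nsmul_eq_mul]
        push_cast; ring

lemma dbl_lower {f h : ℕ → ℝ} {F : ℕ → ℕ → ℝ} (hf0 : ∀ i, 0 ≤ f i)
    (hF0 : ∀ s t, 0 ≤ F s t) (n1 n2 J : ℕ) (h12 : n1 ≤ n2) (hJ : J ≤ n1)
    {d e ρ φ : ℝ} (hφ0 : 0 ≤ φ) (hd : d ≤ (n2 : ℝ) - n1)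
    (hlow : ∀ s : ℕ, s ≤ n2 → ∀ A : Finset ℕ, (∀ t : ℕ, |(t : ℝ) - s| ≤ d → t ∈ A) →
      (1 - ρ) * h s - e ≤ ∑ t ∈ A, F s t)
    (hφ : ∀ j : ℕ, (n2 : ℝ) - n1 - d ≤ j → (j : ℝ) ≤ (n2 : ℝ) - n1 + J + d → φ ≤ f j) :
    φ * ∑ i ∈ Finset.range (J + 1), f i * ((1 - ρ) * h (n1 - i) - e) ≤ dblS f F n1 n2 := by
  have term : ∀ i ∈ Finset.range (J + 1), ∀ j ∈ Finset.range (n2 + 1),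
      f i * φ * (if |((n2 - j : ℕ) : ℝ) - ((n1 - i : ℕ) : ℝ)| ≤ d then
        F (n1 - i) (n2 - j) else 0) ≤ f i * f j * F (n1 - i) (n2 - j) := by
    intro i hi j hj
    have hi : i ≤ J := by simpa [Nat.lt_succ_iff] using hi
    have hj : j ≤ n2 := by simpa [Nat.lt_succ_iff] using hj
    have hF := hF0 (n1 - i) (n2 - j)
    split_ifs with hc
    · have hc2 := abs_le.1 hc
      rw [Nat.cast_sub (hi.trans hJ), Nat.cast_sub hj] at hc2
      have hi0 : (0 : ℝ) ≤ i := by positivity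
      have hiJ : (i : ℝ) ≤ J := by exact_mod_cast hi
      have h1 := hφ j (by linarith [hc2.2]) (by linarith [hc2.1])
      exact mul_le_mul_of_nonneg_right (mul_le_mul_of_nonneg_left h1 (hf0 i)) hF
    · rw [mul_zero]
      exact mul_nonneg (mul_nonneg (hf0 _) (hf0 _)) hF
  calc φ * ∑ i ∈ Finset.range (J + 1), f i * ((1 - ρ) * h (n1 - i) - e)
      = ∑ i ∈ Finset.range (J + 1), f i * φ * ((1 - ρ) * h (n1 - i) - e) := by
        rw [Finset.mul_sum]; exact Finset.sum_congr rfl fun i _ => by ring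
    _ ≤ ∑ i ∈ Finset.range (J + 1), ∑ j ∈ Finset.range (n2 + 1),
        f i * φ * (if |((n2 - j : ℕ) : ℝ) - ((n1 - i : ℕ) : ℝ)| ≤ d then
        F (n1 - i) (n2 - j) else 0) := by
        refine Finset.sum_le_sum fun i _ => ?_
        rw [← Finset.mul_sum]
        apply mul_le_mul_of_nonneg_left _ (mul_nonneg (hf0 i) hφ0)
        have := Finset.sum_range_reflect (fun t : ℕ => if |(t : ℝ) - ((n1 - i : ℕ) : ℝ)| ≤ d then
          F (n1 - i) t else 0) (n2 + 1)
        refine le_trans ?_ this.symm.le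
        rw [← Finset.sum_filter]
        apply hlow _ (by omega)
        intro t ht
        refine Finset.mem_filter.2 ⟨Finset.mem_range.2 ?_, ht⟩
        have h1 := (abs_le.1 ht).2
        have h2 : ((n1 - i : ℕ) : ℝ) ≤ n1 := by
          have : n1 - i ≤ n1 := by omega
          exact_mod_cast this
        have h3 : (t : ℝ) ≤ n2 := by linarith
        have : t ≤ n2 := by exact_mod_cast h3
        omega
    _ ≤ ∑ i ∈ Finset.range (J + 1), ∑ j ∈ Finset.range (n2 + 1),
        f i * f j * F (n1 - i) (n2 - j) :=
        Finset.sum_le_sum fun i hi => Finset.sum_le_sum fun j hj => term i hi j hj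
    _ ≤ _ := by
        apply Finset.sum_le_sum_of_subset_of_nonneg
        · intro i hi
          simp at hi ⊢; omega
        · intro i _ _
          exact Finset.sum_nonneg fun j _ => mul_nonneg (mul_nonneg (hf0 _) (hf0 _)) (hF0 _ _)


lemma shift_lim {u : ℕ → ℝ} {κ U : ℝ}
    (hu : Tendsto (fun n : ℕ => u n * (n : ℝ) ^ κ) atTop (𝓝 U)) (i : ℕ) :
    Tendsto (fun n : ℕ => u (n - i) * (n : ℝ) ^ κ) atTop (𝓝 U) := by
  have h1 : Tendsto (fun n : ℕ => u (n - i) * ((n - i : ℕ) : ℝ) ^ κ) atTop (𝓝 U) :=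
    hu.comp (tendsto_sub_atTop_nat i)
  have h2 : Tendsto (fun n : ℕ => ((n : ℝ) / ((n - i : ℕ) : ℝ)) ^ κ) atTop (𝓝 1) := by
    have h3 : Tendsto (fun n : ℕ => ((n : ℝ) / ((n - i : ℕ) : ℝ))) atTop (𝓝 1) := by
      have h4 : Tendsto (fun n : ℕ => 1 + (i : ℝ) / ((n - i : ℕ) : ℝ)) atTop (𝓝 (1 + 0)) :=
        tendsto_const_nhds.add (tendsto_const_nhds.div_atTop
          (tendsto_natCast_atTop_atTop.comp (tendsto_sub_atTop_nat i)))
      rw [add_zero] at h4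
      refine h4.congr' ?_
      filter_upwards [eventually_gt_atTop i] with n hn
      have : (0 : ℝ) < ((n - i : ℕ) : ℝ) := by
        have : 0 < n - i := by omega
        exact_mod_cast this
      have e : (n : ℝ) = ((n - i : ℕ) : ℝ) + i := by
        have : n = (n - i) + i := by omega
        exact_mod_cast this
      rw [e]
      field_simp
    have := h3.rpow_const (p := κ) (Or.inl one_ne_zero)
    simpa using this
  have h3 := h1.mul h2
  rw [mul_one] at h3
  refine h3.congr' ?_
  filter_upwards [eventually_gt_atTop i] with n hn2
  have : (0 : ℝ) < ((n - i : ℕ) : ℝ) := by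
    have : 0 < n - i := by omega
    exact_mod_cast this
  rw [Real.div_rpow (by positivity) this.le]
  have := Real.rpow_pos_of_pos this κ
  field_simp

lemma log2_lim : Tendsto (fun t : ℕ => Real.log (2 + (t : ℝ))) atTop atTop :=
  Real.tendsto_log_atTop.comp (tendsto_atTop_add_const_left _ _ tendsto_natCast_atTop_atTop)

lemma deltaFn_sq (t : ℕ) : deltaFn t ^ 2 = t * Real.log (2 + (t : ℝ)) ^ 8 := by
  rw [deltaFn, mul_pow, Real.sq_sqrt (by positivity), ← pow_mul]

lemma deltaFn_atTop : Tendsto deltaFn atTop atTop := by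
  have h : Tendsto (fun t : ℕ => Real.sqrt (t : ℝ)) atTop atTop :=
    Real.tendsto_sqrt_atTop.comp tendsto_natCast_atTop_atTop
  refine tendsto_atTop_mono' _ ?_ h
  filter_upwards [log2_lim.eventually_ge_atTop 1] with t ht
  rw [deltaFn]
  exact le_mul_of_one_le_right (Real.sqrt_nonneg _) (one_le_pow₀ ht)

lemma err_lim (E : ℝ) (hE : 0 ≤ E) :
    Tendsto (fun t : ℕ => (t : ℝ) ^ E * Real.exp (-(Real.log (2 + (t : ℝ)) ^ 8 / 24)))
      atTop (𝓝 0) := by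
  have h : Tendsto (fun t : ℕ => Real.exp (-Real.log (2 + (t : ℝ)))) atTop (𝓝 0) :=
    Real.tendsto_exp_neg_atTop_nhds_zero.comp log2_lim
  refine squeeze_zero' (Eventually.of_forall fun t => by positivity) ?_ h
  filter_upwards [log2_lim.eventually_ge_atTop 1, log2_lim.eventually_ge_atTop (24 * (E + 1))]
    with t h1 h2
  set l := Real.log (2 + (t : ℝ)) with hl
  have h3 : (t : ℝ) ^ E ≤ Real.exp (l * E) := by
    have : Real.exp (l * E) = (2 + (t : ℝ)) ^ E := by
      rw [Real.rpow_def_of_pos (by positivity)]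
    rw [this]
    exact Real.rpow_le_rpow (by positivity) (by linarith) hE
  calc _ ≤ Real.exp (l * E) * Real.exp (-(l ^ 8 / 24)) :=
        mul_le_mul_of_nonneg_right h3 (Real.exp_pos _).le
    _ = Real.exp (l * E + -(l ^ 8 / 24)) := by rw [Real.exp_add]
    _ ≤ _ := by
        apply Real.exp_le_exp.2
        have h4 : l ≤ l ^ 7 := le_self_pow₀ h1 (by norm_num)
        have h5 : l * (24 * (E + 1)) ≤ l * l ^ 7 :=
          mul_le_mul_of_nonneg_left (h2.trans h4) (by linarith)
        have h6 : l * l ^ 7 = l ^ 8 := by ring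
        linarith

lemma final_lim {f h : ℕ → ℝ} {F : ℕ → ℕ → ℝ} {κ L K : ℝ} (hκ : 1 < κ)
    (hf0 : ∀ i, 0 ≤ f i) (hf : HasSum f 1)
    (hfl : Tendsto (fun n : ℕ => f n * (n : ℝ) ^ (1 + κ)) atTop (𝓝 L)) (hL : 0 < L)
    (hh0 : ∀ i, 0 ≤ h i)
    (hhl : Tendsto (fun n : ℕ => h n * (n : ℝ) ^ κ) atTop (𝓝 K))
    (hF0 : ∀ s t, 0 ≤ F s t)
    (hFh : ∀ s (A : Finset ℕ), ∑ t ∈ A, F s t ≤ h s)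
    (hfar : ∀ (s t : ℕ) (d M : ℝ), 0 < d → (s : ℝ) ≤ M → (t : ℝ) ≤ M → d ≤ |(s : ℝ) - t| →
      F s t ≤ Real.exp (-(d ^ 2 / (16 * M + 8 * d))))
    (hlow : ∀ (s : ℕ) (d M : ℝ), 0 < d → (s : ℝ) ≤ M → ∀ A : Finset ℕ,
      (∀ t : ℕ, |(t : ℝ) - s| ≤ d → t ∈ A) →
      (1 - 4 * (M + d / 2) / d ^ 2) * h s - Real.exp (-(d ^ 2 / (16 * M + 8 * d))) ≤
        ∑ t ∈ A, F s t)
    (t1 t2 : ℕ → ℕ)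
    (ht1 : Tendsto t1 atTop atTop) (ht2 : Tendsto t2 atTop atTop)
    (hgap : Tendsto (fun k : ℕ => ((t2 k : ℝ) - (t1 k : ℝ)) / deltaFn (t2 k)) atTop atTop) :
    Tendsto (fun k : ℕ => dblS f F (t1 k - 1) (t2 k - 1) *
          ((t2 k : ℝ) - (t1 k : ℝ)) ^ (1 + κ) * (t1 k : ℝ) ^ κ) atTop (𝓝 (L * K)) := by
  have hf1 : ∀ i, f i ≤ 1 := fun i => le_hasSum hf i (fun j _ => hf0 j)
  have hhs : Summable h := summable_of_tail hκ hhl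
  have hf2 : Tendsto (fun n : ℕ => f n * (n : ℝ) ^ κ) atTop (𝓝 0) := by
    have := hfl.mul (tendsto_const_div_atTop_nhds_zero_nat (1 : ℝ))
    rw [mul_zero] at this
    refine this.congr' ?_
    filter_upwards [eventually_gt_atTop 0] with n hn
    have hn0 : (0 : ℝ) < n := by exact_mod_cast hn
    rw [Real.rpow_add hn0, Real.rpow_one]
    field_simp
  have hconv : Tendsto (fun n : ℕ => conv f h n * (n : ℝ) ^ κ) atTop (𝓝 K) := by
    have := conv_lim hf0 hf.summable hh0 hhs (by linarith) hf2 hhl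
    rwa [hf.tsum_eq, one_mul, mul_zero, add_zero] at this
  have hconv2 : Tendsto (fun k => conv f h (t1 k - 1) * (t1 k : ℝ) ^ κ) atTop (𝓝 K) :=
    (shift_lim hconv 1).comp ht1
  set D : ℕ → ℝ := fun k => deltaFn (t2 k) with hD
  set Δ : ℕ → ℝ := fun k => (t2 k : ℝ) - (t1 k : ℝ) with hΔ
  have hDtop : Tendsto D atTop atTop := deltaFn_atTop.comp ht2
  set ε : ℕ → ℝ := fun k => Real.exp (-(Real.log (2 + (t2 k : ℝ)) ^ 8 / 24)) with hε
  have hε0 : ∀ k, 0 ≤ ε k := fun k => (Real.exp_pos _).le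
  set ρ : ℕ → ℝ := fun k => 4 * ((t2 k : ℝ) + D k / 2) / D k ^ 2 with hρ
  -- basic eventual facts
  have basic : ∀ᶠ k in atTop, 1 ≤ t1 k ∧ t1 k ≤ t2 k ∧ 0 < D k ∧ 2 * D k ≤ Δ k ∧
      Δ k ≤ t2 k ∧
      Real.exp (-(D k ^ 2 / (16 * (t2 k : ℝ) + 8 * D k))) ≤ ε k := by
    filter_upwards [ht1.eventually_ge_atTop 1, hDtop.eventually_gt_atTop 0,
      hgap.eventually_ge_atTop 2] with k h1 h2 h3
    have h4 : 2 * D k ≤ Δ k := by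
      have := (le_div_iff₀ h2).1 h3
      exact this
    have h5 : t1 k ≤ t2 k := by
      have : (t1 k : ℝ) ≤ t2 k := by
        have : 0 ≤ Δ k := by linarith
        simp only [hΔ] at this; linarith
      exact_mod_cast this
    have h6 : Δ k ≤ t2 k := by
      simp only [hΔ]
      have : (0 : ℝ) ≤ t1 k := by positivity
      linarith
    refine ⟨h1, h5, h2, h4, h6, ?_⟩
    have ht : (0 : ℝ) < t2 k := by linarith
    apply Real.exp_le_exp.2
    apply neg_le_neg
    have e : D k ^ 2 = t2 k * Real.log (2 + (t2 k : ℝ)) ^ 8 := deltaFn_sq _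
    rw [le_div_iff₀ (by positivity), e]
    have hl : 0 ≤ Real.log (2 + (t2 k : ℝ)) ^ 8 := by positivity
    nlinarith
  have hΔD : Tendsto (fun k => Δ k - D k) atTop atTop := by
    refine tendsto_atTop_mono' _ ?_ hDtop
    filter_upwards [basic] with k hk
    linarith [hk.2.2.2.1]
  have hΔtop : Tendsto Δ atTop atTop := by
    refine tendsto_atTop_mono' _ ?_ hDtop
    filter_upwards [basic] with k hk
    linarith [hk.2.2.2.1, hk.2.2.1]
  have hDΔ : Tendsto (fun k => D k / Δ k) atTop (𝓝 0) := by
    refine hgap.inv_tendsto_atTop.congr fun k => ?_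
    simp only [Pi.inv_apply, inv_div, hD, hΔ]
  have hrat1 : Tendsto (fun k => (Δ k / (Δ k - D k)) ^ (1 + κ)) atTop (𝓝 1) := by
    have h1 : Tendsto (fun k => (1 - D k / Δ k)⁻¹) atTop (𝓝 (1 - 0)⁻¹) :=
      (tendsto_const_nhds.sub hDΔ).inv₀ (by norm_num)
    rw [sub_zero, inv_one] at h1
    have h2 := h1.rpow_const (p := 1 + κ) (Or.inl one_ne_zero)
    rw [Real.one_rpow] at h2
    refine h2.congr' ?_
    filter_upwards [hΔtop.eventually_gt_atTop 0, hΔD.eventually_gt_atTop 0] with k h3 h4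
    congr 1
    field_simp
  have hrat2 : ∀ J : ℝ, Tendsto (fun k => (Δ k / (Δ k + J + D k)) ^ (1 + κ)) atTop (𝓝 1) := by
    intro J
    have h1 : Tendsto (fun k => (1 + J / Δ k + D k / Δ k)⁻¹) atTop (𝓝 (1 + 0 + 0)⁻¹) :=
      ((tendsto_const_nhds.add (tendsto_const_nhds.div_atTop hΔtop)).add hDΔ).inv₀ (by norm_num)
    rw [add_zero, add_zero, inv_one] at h1
    have h2 := h1.rpow_const (p := 1 + κ) (Or.inl one_ne_zero)
    rw [Real.one_rpow] at h2
    refine h2.congr' ?_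
    filter_upwards [hΔtop.eventually_gt_atTop 0] with k h3
    congr 1
    field_simp
  have herr1 : Tendsto (fun k => (t2 k : ℝ) ^ (2 + (1 + κ) + κ) * ε k) atTop (𝓝 0) :=
    (err_lim _ (by linarith)).comp ht2
  have herr2 : Tendsto (fun k => ε k * (t1 k : ℝ) ^ κ) atTop (𝓝 0) := by
    have h1 : Tendsto (fun k => (t2 k : ℝ) ^ κ * ε k) atTop (𝓝 0) :=
      (err_lim κ (by linarith)).comp ht2
    refine squeeze_zero' (Eventually.of_forall fun k => mul_nonneg (hε0 k) (by positivity)) ?_ h1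
    filter_upwards [basic] with k hk
    rw [mul_comm]
    apply mul_le_mul_of_nonneg_right _ (hε0 k)
    apply Real.rpow_le_rpow (by positivity) _ (by linarith)
    exact_mod_cast hk.2.1
  have hρl : Tendsto ρ atTop (𝓝 0) := by
    have h1 : Tendsto (fun k => 4 / Real.log (2 + (t2 k : ℝ)) ^ 8) atTop (𝓝 0) :=
      tendsto_const_nhds.div_atTop
        ((tendsto_pow_atTop (by norm_num)).comp (log2_lim.comp ht2))
    have h2 : Tendsto (fun k => 2 / D k) atTop (𝓝 0) := tendsto_const_nhds.div_atTop hDtop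
    have h3 := h1.add h2
    rw [add_zero] at h3
    refine h3.congr' ?_
    filter_upwards [basic, (log2_lim.comp ht2).eventually_gt_atTop 0] with k hk hk2
    have e : D k ^ 2 = t2 k * Real.log (2 + (t2 k : ℝ)) ^ 8 := deltaFn_sq _
    have hD0 := hk.2.2.1
    have ht : (0 : ℝ) < t2 k := by linarith [hk.2.2.2.1, hk.2.2.2.2.1]
    simp only [Function.comp] at hk2
    have e2 : ρ k = 4 * (t2 k : ℝ) / D k ^ 2 + 2 / D k := by
      simp only [hρ]; field_simp; ring
    rw [e2, e]
    congr 1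
    field_simp
  -- eventual bounds for f
  have hη : Tendsto (fun J : ℕ => 1 / ((J : ℝ) + 1)) atTop (𝓝 0) :=
    tendsto_one_div_add_atTop_nhds_zero_nat
  rw [tendsto_order]
  constructor
  · intro c hc
    have hS : Tendsto (fun J : ℕ => ∑ i ∈ Finset.range (J + 1), f i) atTop (𝓝 1) :=
      hf.tendsto_sum_nat.comp (tendsto_add_atTop_nat 1)
    have h1 : Tendsto (fun J : ℕ => L - 1 / ((J : ℝ) + 1)) atTop (𝓝 (L - 0)) :=
      tendsto_const_nhds.sub hη
    rw [sub_zero] at h1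
    have h2 : Tendsto (fun J : ℕ => (L - 1 / ((J : ℝ) + 1)) *
        ((∑ i ∈ Finset.range (J + 1), f i) * K)) atTop (𝓝 (L * (1 * K))) :=
      h1.mul (hS.mul_const K)
    rw [one_mul] at h2
    obtain ⟨J, hJ1, hJ2⟩ := ((h2.eventually (lt_mem_nhds hc)).and
      (h1.eventually (lt_mem_nhds hL))).exists
    set ℓ := L - 1 / ((J : ℝ) + 1) with hℓ
    have hℓL : ℓ < L := by
      have : (0 : ℝ) < 1 / ((J : ℝ) + 1) := by positivity
      linarith
    obtain ⟨N, hN⟩ := eventually_atTop.1 (hfl.eventually (lt_mem_nhds hℓL))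
    have hsum : Tendsto (fun k => ∑ i ∈ Finset.range (J + 1),
        f i * ((1 - ρ k) * (h (t1 k - (i + 1)) * (t1 k : ℝ) ^ κ) - ε k * (t1 k : ℝ) ^ κ)) atTop
        (𝓝 (∑ i ∈ Finset.range (J + 1), f i * ((1 - 0) * K - 0))) := by
      refine tendsto_finset_sum _ fun i _ => ?_
      exact (((tendsto_const_nhds.sub hρl).mul ((shift_lim hhl (i + 1)).comp ht1)).sub
        herr2).const_mul (f i)
    have hY := ((hrat2 J).const_mul ℓ).mul hsum
    have eY : ℓ * 1 * (∑ i ∈ Finset.range (J + 1), f i * ((1 - 0) * K - 0)) =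
        ℓ * ((∑ i ∈ Finset.range (J + 1), f i) * K) := by
      rw [Finset.sum_mul]; simp
    rw [eY] at hY
    filter_upwards [hY.eventually (lt_mem_nhds hJ1), basic, ht1.eventually_ge_atTop (J + 1),
      hΔD.eventually_ge_atTop ((N : ℝ) + 1)] with k hk ⟨b1, b2, b3, b4, b5, b6⟩ hkJ hkN
    refine lt_of_lt_of_le hk ?_
    have hX0 : 0 < Δ k + J + D k := by
      have : (0 : ℝ) ≤ J := by positivity
      linarith
    have c1 : ((t1 k - 1 : ℕ) : ℝ) = t1 k - 1 := by rw [Nat.cast_sub b1]; simp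
    have c2 : ((t2 k - 1 : ℕ) : ℝ) = t2 k - 1 := by rw [Nat.cast_sub (b1.trans b2)]; simp
    have c3 : ((t2 k - 1 : ℕ) : ℝ) - ((t1 k - 1 : ℕ) : ℝ) = Δ k := by
      rw [c1, c2]; simp only [hΔ]; ring
    have hp : 0 < (Δ k + J + D k) ^ (1 + κ) := Real.rpow_pos_of_pos hX0 _
    have main := dbl_lower (h := h) hf0 hF0 (t1 k - 1) (t2 k - 1) J (by omega) (by omega)
      (d := D k) (e := ε k) (ρ := ρ k) (φ := ℓ / (Δ k + J + D k) ^ (1 + κ)) (by positivity)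
      (by rw [c3]; linarith)
      (by
        intro s hs A hA
        have hs' : (s : ℝ) ≤ t2 k := by
          have : s ≤ t2 k := by omega
          exact_mod_cast this
        have := hlow s (D k) (t2 k) b3 hs' A hA
        simp only [hρ]
        linarith)
      (by
        intro j hj1 hj2
        rw [c3] at hj1 hj2
        have hjN : N ≤ j := by
          have : (N : ℝ) ≤ j := by linarith
          exact_mod_cast this
        have hj0 : (0 : ℝ) < j := by
          have : (0 : ℝ) ≤ N := by positivity
          linarith
        have h3 := hN j hjN
        have hjp : 0 < (j : ℝ) ^ (1 + κ) := Real.rpow_pos_of_pos hj0 _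
        rw [div_le_iff₀ hp]
        refine h3.le.trans (mul_le_mul_of_nonneg_left ?_ (hf0 j))
        exact Real.rpow_le_rpow hj0.le hj2 (by linarith))
    have hΔ0 : 0 ≤ Δ k := by linarith
    have hm2 := mul_le_mul_of_nonneg_right main
      (show 0 ≤ (Δ k) ^ (1 + κ) * (t1 k : ℝ) ^ κ by positivity)
    have eL : ℓ * (Δ k / (Δ k + J + D k)) ^ (1 + κ) * (∑ i ∈ Finset.range (J + 1),
        f i * ((1 - ρ k) * (h (t1 k - (i + 1)) * (t1 k : ℝ) ^ κ) - ε k * (t1 k : ℝ) ^ κ)) =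
        ℓ / (Δ k + J + D k) ^ (1 + κ) * (∑ i ∈ Finset.range (J + 1),
          f i * ((1 - ρ k) * h (t1 k - 1 - i) - ε k)) * ((Δ k) ^ (1 + κ) * (t1 k : ℝ) ^ κ) := by
      rw [Real.div_rpow hΔ0 hX0.le]
      have : ∑ i ∈ Finset.range (J + 1),
          f i * ((1 - ρ k) * (h (t1 k - (i + 1)) * (t1 k : ℝ) ^ κ) - ε k * (t1 k : ℝ) ^ κ) =
          (∑ i ∈ Finset.range (J + 1), f i * ((1 - ρ k) * h (t1 k - 1 - i) - ε k)) *
            (t1 k : ℝ) ^ κ := by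
        rw [Finset.sum_mul]
        refine Finset.sum_congr rfl fun i _ => ?_
        rw [Nat.sub_sub, add_comm 1 i]; ring
      rw [this]; ring
    rw [eL, mul_assoc _ (Δ k ^ (1 + κ)) _]
    exact hm2
  · intro c hc
    have h1 : Tendsto (fun J : ℕ => L + 1 / ((J : ℝ) + 1)) atTop (𝓝 (L + 0)) :=
      tendsto_const_nhds.add hη
    rw [add_zero] at h1
    obtain ⟨J, hJ1⟩ := ((h1.mul_const K).eventually (gt_mem_nhds hc)).exists
    set ℓ := L + 1 / ((J : ℝ) + 1) with hℓ
    have hℓL : L < ℓ := by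
      have : (0 : ℝ) < 1 / ((J : ℝ) + 1) := by positivity
      linarith
    have hℓ0 : 0 < ℓ := hL.trans hℓL
    obtain ⟨N, hN⟩ := eventually_atTop.1 (hfl.eventually (gt_mem_nhds hℓL))
    have hY := (((hrat1.const_mul ℓ).mul hconv2).add herr1)
    rw [mul_one, add_zero] at hY
    filter_upwards [hY.eventually (gt_mem_nhds hJ1), basic,
      hΔD.eventually_ge_atTop ((N : ℝ) + 1)] with k hk ⟨b1, b2, b3, b4, b5, b6⟩ hkN
    refine lt_of_le_of_lt ?_ hk
    have hX0 : 0 < Δ k - D k := by linarith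
    have c1 : ((t1 k - 1 : ℕ) : ℝ) = t1 k - 1 := by rw [Nat.cast_sub b1]; simp
    have c2 : ((t2 k - 1 : ℕ) : ℝ) = t2 k - 1 := by rw [Nat.cast_sub (b1.trans b2)]; simp
    have c3 : ((t2 k - 1 : ℕ) : ℝ) - ((t1 k - 1 : ℕ) : ℝ) = Δ k := by
      rw [c1, c2]; simp only [hΔ]; ring
    have hp : 0 < (Δ k - D k) ^ (1 + κ) := Real.rpow_pos_of_pos hX0 _
    have main := dbl_upper (h := h) hf0 hf1 hF0 (t1 k - 1) (t2 k - 1) (by omega) hFh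
      (d := D k) (e := ε k) (Φ := ℓ / (Δ k - D k) ^ (1 + κ)) (hε0 k) (by positivity)
      (by
        intro s t hs ht hst
        have hs' : (s : ℝ) ≤ t2 k := by
          have : s ≤ t2 k := by omega
          exact_mod_cast this
        have ht' : (t : ℝ) ≤ t2 k := by
          have : t ≤ t2 k := by omega
          exact_mod_cast this
        exact (hfar s t (D k) (t2 k) b3 hs' ht' hst).trans b6)
      (by
        intro j hj1
        rw [c3] at hj1
        have hjN : N ≤ j := by
          have : (N : ℝ) ≤ j := by linarith
          exact_mod_cast this
        have hj0 : (0 : ℝ) < j := by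
          have : (0 : ℝ) ≤ N := by positivity
          linarith
        have h3 := hN j hjN
        rw [le_div_iff₀ hp]
        refine le_trans (mul_le_mul_of_nonneg_left ?_ (hf0 j)) h3.le
        exact Real.rpow_le_rpow hX0.le hj1 (by linarith))
    have hΔ0 : 0 ≤ Δ k := by linarith
    have hm2 := mul_le_mul_of_nonneg_right main
      (show 0 ≤ (Δ k) ^ (1 + κ) * (t1 k : ℝ) ^ κ by positivity)
    rw [mul_assoc _ (Δ k ^ (1 + κ)) _]
    refine hm2.trans ?_
    rw [add_mul, c1, c2, Real.div_rpow hΔ0 hX0.le]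
    apply add_le_add
    · apply le_of_eq; ring
    · have ht12 : (t1 k : ℝ) ≤ t2 k := by exact_mod_cast b2
      have ht0 : (0 : ℝ) < t2 k := by linarith
      have g1 : (Δ k) ^ (1 + κ) ≤ (t2 k : ℝ) ^ (1 + κ) :=
        Real.rpow_le_rpow hΔ0 b5 (by linarith)
      have g2 : (t1 k : ℝ) ^ κ ≤ (t2 k : ℝ) ^ κ :=
        Real.rpow_le_rpow (by positivity) ht12 (by linarith)
      have e : (t2 k : ℝ) ^ (2 + (1 + κ) + κ) * ε k =
          (t2 k : ℝ) * (t2 k) * ε k * ((t2 k : ℝ) ^ (1 + κ) * (t2 k : ℝ) ^ κ) := by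
        rw [Real.rpow_add ht0, Real.rpow_add ht0, Real.rpow_two]; ring
      rw [e]
      have g3 := hε0 k
      simp only [sub_add_cancel]
      gcongr

/-- **Theorem 2, eq. (9)** (Bloznelis–Karjalainen–Leskelä). Under the power-law layer type
distribution, with `δ_t = t^{1/2} ln⁴(2+t)`: for `t₁, t₂ → ∞` with `(t₂-t₁)/δ_{t₂} → ∞`,
`P(D₁* = t₁, D₂* = t₂) = (1+o(1)) c'' (t₂-t₁)^{-1-(α-2)/(1-β)} t₁^{-(α-2)/(1-β)}` with
`c'' = μ a² b^{2(α-2)/(1-β)} (1-β)^{-2} P₂₁⁻¹`. -/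
theorem barf2_joint_tail
    (mu a b α β : ℝ) (hmu : 0 < mu) (ha : 0 < a) (hb : 0 < b)
    (hα : 2 < α) (hβ0 : 0 ≤ β) (hβ1 : β < 1) (hαβ : 3 < α + β)
    (hb1 : β = 0 → b < 1)
    (p : ℕ → ℝ) (hpnn : ∀ x, 0 ≤ p x) (hpsum : HasSum p 1)
    (hptail : Tendsto (fun x : ℕ => p x * (x : ℝ) ^ α) atTop (𝓝 a))
    (q : ℕ → ℝ) (hq : ∀ x : ℕ, q x = min 1 (b * (x : ℝ) ^ (-β)))
    (t1 t2 : ℕ → ℕ)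
    (ht1 : Tendsto t1 atTop atTop) (ht2 : Tendsto t2 atTop atTop)
    (hgap : Tendsto (fun k : ℕ => ((t2 k : ℝ) - (t1 k : ℝ)) / deltaFn (t2 k)) atTop atTop) :
    Tendsto (fun k : ℕ =>
        barf2 mu p q (t1 k) (t2 k) *
          ((t2 k : ℝ) - (t1 k : ℝ)) ^ (1 + (α - 2) / (1 - β)) *
          (t1 k : ℝ) ^ ((α - 2) / (1 - β))) atTop
      (𝓝 (mu * a ^ 2 * b ^ (2 * (α - 2) / (1 - β)) * ((1 - β) ^ 2)⁻¹ * (mom p q 2 1)⁻¹)) := by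
  set κ := (α - 2) / (1 - β) with hκdef
  have hβ' : 0 < 1 - β := by linarith
  have hκ : 1 < κ := by rw [hκdef, one_lt_div hβ']; linarith
  obtain ⟨f0, f1, fl⟩ := barf1_facts hmu ha hb hα hβ0 hβ1 hαβ hb1 hpnn hptail hq
  obtain ⟨w0, w1, hP0, hF, hl⟩ := wt2_facts ha hb hβ0 hβ1 hαβ hb1 hpnn hptail hq
  rw [← hκdef] at fl hl
  have hq0 := fun x => q_nonneg hb hq x
  have hq1 := fun x => q_le_one hq x
  have main := final_lim (F := f2p p q) (h := fun s => ∑' x, wt2 p q x * binP (x - 2) (q x) s)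
    hκ f0 f1 fl (by positivity)
    (fun s => tsum_nonneg fun x => mul_nonneg (w0 x) (binP_nonneg _ (hq0 x) (hq1 x) s)) hl
    (fun s t => by
      rw [hF]
      exact tsum_nonneg fun x => mul_nonneg (w0 x)
        (mul_nonneg (binP_nonneg _ (hq0 x) (hq1 x) s) (binP_nonneg _ (hq0 x) (hq1 x) t)))
    (fun s A => by
      simp_rw [hF]
      exact mix_sum_le (N := fun x => x - 2) w0 w1 hq0 hq1 s A)
    (fun s t d M hd hs ht hst => by
      rw [hF]
      exact mix_far (N := fun x => x - 2) w0 w1 hq0 hq1 s t hd hs ht hst)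
    (fun s d M hd hs A hA => by
      simp_rw [hF]
      exact mix_lower (N := fun x => x - 2) w0 w1 hq0 hq1 s hd hs A hA)
    t1 t2 ht1 ht2 hgap
  have e : mu * a * b ^ κ / (1 - β) * (a * b ^ κ / (1 - β) / mom p q 2 1) =
      mu * a ^ 2 * b ^ (2 * (α - 2) / (1 - β)) * ((1 - β) ^ 2)⁻¹ * (mom p q 2 1)⁻¹ := by
    have e1 : 2 * (α - 2) / (1 - β) = κ + κ := by rw [hκdef]; ring
    rw [e1, Real.rpow_add hb]
    field_simp
  rw [e] at main
  refine main.congr' ?_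
  filter_upwards [ht1.eventually_ge_atTop 1, ht2.eventually_ge_atTop 1] with k h1 h2
  rw [← barf2_eq, Nat.sub_add_cancel h1, Nat.sub_add_cancel h2]
end
end

section
/- For any probability distribution P on ℤ_+ × [0,1], one has P_{32}² ≤ P_{21}(P_{43} + P_{33}). -/
open MeasureTheory
open scoped ENNReal

noncomputable section

/-- The cross moment `P_{rs} = E[(X)_r Y^s]` of a probability measure `P` on `ℤ₊ × [0,1]`,
where `(x)_r` is the falling factorial (value in `[0,∞]`). -/
def momL (Q : Measure (ℕ × ℝ)) (r s : ℕ) : ℝ≥0∞ :=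
  ∫⁻ p, (p.1.descFactorial r : ℝ≥0∞) * ENNReal.ofReal (p.2 ^ s) ∂Q

/-- **Lemma 1** (Bloznelis–Karjalainen–Leskelä; generalizes Remark 2 of
Bloznelis–Jaworski–Kurauskas). For any probability distribution `P` on `ℤ₊ × [0,1]`,
`P₃₂² ≤ P₂₁ (P₄₃ + P₃₃)`. -/
theorem moment_inequality
    (P : Measure (ℕ × ℝ)) [IsProbabilityMeasure P]
    (hsupp : P {p : ℕ × ℝ | p.2 ∈ Set.Icc (0:ℝ) 1} = 1) :
    momL P 3 2 ^ 2 ≤ momL P 2 1 * (momL P 4 3 + momL P 3 3) := by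
  have hae : ∀ᵐ p ∂P, p.2 ∈ Set.Icc (0:ℝ) 1 := by
    have hm : MeasurableSet {p : ℕ × ℝ | p.2 ∈ Set.Icc (0:ℝ) 1} :=
      measurable_snd measurableSet_Icc
    exact (prob_compl_eq_zero_iff hm).2 hsupp
  have hmeas : ∀ r s : ℕ, Measurable (fun p : ℕ × ℝ =>
      (p.1.descFactorial r : ℝ≥0∞) * ENNReal.ofReal (p.2 ^ s)) := by
    intro r s
    have h1 : Measurable (fun n : ℕ => (n.descFactorial r : ℝ≥0∞)) := measurable_from_nat
    exact (h1.comp measurable_fst).mul (by fun_prop)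
  have hadd : momL P 4 3 + momL P 3 3 = ∫⁻ p, ((p.1.descFactorial 4 : ℝ≥0∞) *
      ENNReal.ofReal (p.2 ^ 3) + (p.1.descFactorial 3 : ℝ≥0∞) * ENNReal.ofReal (p.2 ^ 3)) ∂P := by
    unfold momL
    rw [lintegral_add_left (hmeas 4 3)]
  rw [hadd]
  unfold momL
  set a : ℕ × ℝ → ℝ≥0∞ := fun p => (p.1.descFactorial 2 : ℝ≥0∞) * ENNReal.ofReal (p.2 ^ 1) with ha
  set b : ℕ × ℝ → ℝ≥0∞ := fun p => (p.1.descFactorial 4 : ℝ≥0∞) *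
      ENNReal.ofReal (p.2 ^ 3) + (p.1.descFactorial 3 : ℝ≥0∞) * ENNReal.ofReal (p.2 ^ 3) with hb
  have ham : Measurable a := hmeas 2 1
  have hbm : Measurable b := (hmeas 4 3).add (hmeas 3 3)
  have hsq : ∀ x : ℝ≥0∞, (x ^ (1/2 : ℝ)) ^ (2 : ℝ) = x := by
    intro x
    rw [← ENNReal.rpow_mul]; norm_num
  have hsq' : ∀ x : ℝ≥0∞, (x ^ (1/2 : ℝ)) ^ 2 = x := by
    intro x
    rw [← ENNReal.rpow_natCast]; exact_mod_cast hsq x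
  have hpt : ∀ᵐ p ∂P, (p.1.descFactorial 3 : ℝ≥0∞) * ENNReal.ofReal (p.2 ^ 2)
      = ((fun p => a p ^ (1/2 : ℝ)) * (fun p => b p ^ (1/2 : ℝ))) p := by
    filter_upwards [hae] with p hp
    obtain ⟨n, y⟩ := p
    have hy : 0 ≤ y := hp.1
    have hn : n.descFactorial 3 ^ 2
        = n.descFactorial 2 * (n.descFactorial 4 + n.descFactorial 3) := by
      rcases n with _ | _ | _ | n
      · simp
      · simp
      · simp [Nat.descFactorial]
      · simp [Nat.descFactorial]; ring
    have hn' : (n.descFactorial 3 : ℝ≥0∞) ^ 2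
        = n.descFactorial 2 * (n.descFactorial 4 + n.descFactorial 3) := by exact_mod_cast hn
    have key : ((n.descFactorial 3 : ℝ≥0∞) * ENNReal.ofReal (y ^ 2)) ^ (2:ℝ)
        = a (n, y) * b (n, y) := by
      simp only [ha, hb]
      rw [show (2:ℝ) = ((2:ℕ):ℝ) by norm_num, ENNReal.rpow_natCast, mul_pow, hn']
      simp only [ENNReal.ofReal_pow hy]
      ring
    simp only [Pi.mul_apply]
    rw [← ENNReal.mul_rpow_of_nonneg _ _ (by norm_num), ← key, ← ENNReal.rpow_mul]
    norm_num
  rw [lintegral_congr_ae hpt]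
  have hH := ENNReal.lintegral_mul_le_Lp_mul_Lq P Real.HolderConjugate.two_two
    (ham.pow_const (1/2 : ℝ)).aemeasurable (hbm.pow_const (1/2 : ℝ)).aemeasurable
  simp only [hsq] at hH
  calc _ ≤ ((∫⁻ p, a p ∂P) ^ (1/2 : ℝ) * (∫⁻ p, b p ∂P) ^ (1/2 : ℝ)) ^ 2 := by
        gcongr
    _ = _ := by rw [mul_pow, hsq', hsq']
end
end

section
/- Let (D'_1, D'_2) have the distribution f'_2 under a power-law layer type distribution, and let δ_t = t^{1/2} ln⁴(2+t). Then for any s_0 > 0 there exists a constant c_{**} > 0 (depending on s_0, β, b) such that for all s, t with s_0 < s + δ_s + δ_t < t, one has P(D'_1 = s, D'_2 = t) ≤ e^{−c_{**} ln⁸ t}. -/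
open MeasureTheory ProbabilityTheory Filter
open scoped ENNReal Topology Classical

noncomputable section

lemma binP_nonneg_aux {n : ℕ} {y : ℝ} (h0 : 0 ≤ y) (h1 : y ≤ 1) (k : ℕ) : 0 ≤ binP n y k := by
  unfold binP
  have : 0 ≤ 1 - y := by linarith
  positivity

lemma binP_mul_pow_le {n : ℕ} {y z : ℝ} (h0 : 0 ≤ y) (h1 : y ≤ 1) (hz : 0 ≤ z) (k : ℕ) :
    binP n y k * z ^ k ≤ (y * z + (1 - y)) ^ n := by
  have hy : 0 ≤ 1 - y := by linarith
  unfold binP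
  by_cases hk : k ≤ n
  · rw [add_pow]
    have := Finset.single_le_sum (s := Finset.range (n + 1))
      (f := fun m => (y * z) ^ m * (1 - y) ^ (n - m) * (n.choose m : ℝ))
      (fun i _ => by positivity) (Finset.mem_range.2 (Nat.lt_succ_of_le hk))
    refine le_trans (le_of_eq ?_) this
    simp only [mul_pow]
    ring
  · rw [Nat.choose_eq_zero_of_lt (by omega)]
    simp only [Nat.cast_zero, zero_mul]
    positivity

lemma exp_le_of_pos_aux {x u : ℝ} (hx : 0 < x) (hu : u ≤ 1 - x⁻¹) : Real.exp u ≤ x := by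
  rw [← Real.le_log_iff_exp_le hx]
  exact hu.trans (Real.one_sub_inv_le_log_of_pos hx)

lemma binP_prod_le {n : ℕ} {y : ℝ} (h0 : 0 ≤ y) (h1 : y ≤ 1) {s t : ℕ} {d : ℝ}
    (hd0 : 0 ≤ d) (hd : (s : ℝ) + d < t) :
    binP n y s * binP n y t ≤ Real.exp (-(d ^ 2 / (10 * t))) := by
  have hs : (0 : ℝ) ≤ s := Nat.cast_nonneg s
  have ht : (0 : ℝ) < t := by linarith
  obtain ⟨e, he⟩ : ∃ e : ℝ, e = d / (5 * t) := ⟨_, rfl⟩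
  have hde : d = 5 * t * e := by rw [he]; field_simp
  have he0 : 0 ≤ e := by rw [he]; positivity
  have he1 : e ≤ 1 / 5 := by
    rw [he, div_le_div_iff₀ (by positivity) (by norm_num)]; linarith
  have hA : Real.exp (-e - 3 / 2 * e ^ 2) ≤ 1 - e := by
    have hp : 0 < 1 - e := by linarith
    apply exp_le_of_pos_aux hp
    have : 1 - (1 - e)⁻¹ = -e - 3 / 2 * e ^ 2 + e ^ 2 * (1 / 2 - 3 / 2 * e) / (1 - e) := by
      field_simp; ring
    have h2 : 0 ≤ e ^ 2 * (1 / 2 - 3 / 2 * e) / (1 - e) :=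
      div_nonneg (mul_nonneg (sq_nonneg _) (by linarith)) hp.le
    linarith
  have hB : Real.exp (e - e ^ 2) ≤ 1 + e := by
    have hp : 0 < 1 + e := by linarith
    apply exp_le_of_pos_aux hp
    have : 1 - (1 + e)⁻¹ = e - e ^ 2 + e ^ 3 / (1 + e) := by field_simp; ring
    have h2 : 0 ≤ e ^ 3 / (1 + e) := by positivity
    linarith
  have h1' := binP_mul_pow_le (n := n) h0 h1 (show 0 ≤ 1 - e by linarith) s
  have h2' := binP_mul_pow_le (n := n) h0 h1 (show 0 ≤ 1 + e by linarith) t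
  have hbs := binP_nonneg_aux (n := n) h0 h1 s
  have hbt := binP_nonneg_aux (n := n) h0 h1 t
  have hye0 : 0 ≤ y * e := by positivity
  have hye1 : y * e ≤ 1 := by nlinarith
  have hprod : (binP n y s * (1 - e) ^ s) * (binP n y t * (1 + e) ^ t) ≤ 1 := by
    have hm := mul_le_mul h1' h2' (by positivity)
      (pow_nonneg (by nlinarith) _)
    refine hm.trans ?_
    rw [← mul_pow]
    apply pow_le_one₀ <;> nlinarith
  have hlow : Real.exp (d ^ 2 / (10 * t)) ≤ (1 - e) ^ s * (1 + e) ^ t := by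
    have ha := pow_le_pow_left₀ (Real.exp_pos _).le hA s
    have hb := pow_le_pow_left₀ (Real.exp_pos _).le hB t
    rw [← Real.exp_nat_mul] at ha hb
    refine le_trans ?_ (mul_le_mul ha hb (Real.exp_pos _).le (pow_nonneg (by linarith) _))
    rw [← Real.exp_add, Real.exp_le_exp]
    have : d ^ 2 / (10 * t) = 5 / 2 * t * e ^ 2 := by rw [hde]; field_simp; ring
    rw [this]
    have h3 : 0 ≤ (t - s - 5 * t * e) * e := mul_nonneg (by linarith) he0
    have h4 : 0 ≤ (t - s : ℝ) * e ^ 2 := mul_nonneg (by linarith) (sq_nonneg _)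
    nlinarith
  rw [Real.exp_neg, ← one_div, le_div_iff₀ (Real.exp_pos _)]
  refine le_trans (mul_le_mul_of_nonneg_left hlow (mul_nonneg hbs hbt)) ?_
  refine le_trans (le_of_eq ?_) hprod
  ring

/-- **Off-diagonal bound (eq. (2020-02-27) in the paper)**. Under the power-law layer type
distribution, with `δ_t = t^{1/2} ln⁴(2+t)`: for any `s₀ > 0` there is a constant
`c** > 0` such that `P(D₁' = s, D₂' = t) ≤ exp(-c** ln⁸ t)` whenever
`s₀ < s + δ_s + δ_t < t`. -/
theorem f2p_offdiagonal_bound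
    (a b α β : ℝ) (ha : 0 < a) (hb : 0 < b)
    (hα : 2 < α) (hβ0 : 0 ≤ β) (hβ1 : β < 1) (hαβ : 3 < α + β)
    (hb1 : β = 0 → b < 1)
    (p : ℕ → ℝ) (hpnn : ∀ x, 0 ≤ p x) (hpsum : HasSum p 1)
    (hptail : Tendsto (fun x : ℕ => p x * (x : ℝ) ^ α) atTop (𝓝 a))
    (q : ℕ → ℝ) (hq : ∀ x : ℕ, q x = min 1 (b * (x : ℝ) ^ (-β))) :
    ∀ s0 : ℝ, 0 < s0 → ∃ c : ℝ, 0 < c ∧ ∀ s t : ℕ,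
      s0 < (s : ℝ) + deltaFn s + deltaFn t → (s : ℝ) + deltaFn s + deltaFn t < (t : ℝ) →
      f2p p q s t ≤ Real.exp (-c * Real.log t ^ (8 : ℕ)) := by
  intro s0 _
  refine ⟨1 / 10, by norm_num, ?_⟩
  intro s t _ hst
  have hs : (0 : ℝ) ≤ s := Nat.cast_nonneg s
  have hdn : ∀ k : ℕ, 0 ≤ deltaFn k := fun k => by unfold deltaFn; positivity
  have hds := hdn s
  have hdt := hdn t
  have ht : (0 : ℝ) < t := by linarith
  have ht1 : (1 : ℝ) ≤ t := by
    have : 0 < t := by exact_mod_cast ht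
    exact_mod_cast this
  have hq0 : ∀ x, 0 ≤ q x := fun x => by
    rw [hq]; exact le_min zero_le_one (by positivity)
  have hq1 : ∀ x, q x ≤ 1 := fun x => by rw [hq]; exact min_le_left _ _
  set K : ℝ := Real.exp (-(1 / 10) * Real.log t ^ (8 : ℕ)) with hK
  have hK0 : 0 < K := Real.exp_pos _
  have key : ∀ x : ℕ, binP (x - 2) (q x) s * binP (x - 2) (q x) t ≤ K := by
    intro x
    refine (binP_prod_le (hq0 x) (hq1 x) hdt (by linarith)).trans ?_
    rw [hK, Real.exp_le_exp]
    have h1 : deltaFn t ^ 2 / (10 * t) = 1 / 10 * Real.log (2 + (t : ℝ)) ^ 8 := by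
      unfold deltaFn
      rw [mul_pow, Real.sq_sqrt ht.le]
      field_simp
    have h2 : Real.log t ^ 8 ≤ Real.log (2 + (t : ℝ)) ^ 8 :=
      pow_le_pow_left₀ (Real.log_nonneg ht1) (Real.log_le_log ht (by linarith)) 8
    rw [h1]
    linarith
  unfold f2p
  have hw0 : ∀ x : ℕ, 0 ≤ (x.descFactorial 2 : ℝ) * q x ^ 1 * p x := fun x =>
    mul_nonneg (mul_nonneg (Nat.cast_nonneg _) (pow_nonneg (hq0 x) _)) (hpnn x)
  have hle : ∀ x : ℕ, (x.descFactorial 2 : ℝ) * q x * binP (x - 2) (q x) s *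
      binP (x - 2) (q x) t * p x ≤ K * ((x.descFactorial 2 : ℝ) * q x ^ 1 * p x) := fun x => by
    have := mul_le_mul_of_nonneg_right (key x) (hw0 x)
    refine le_trans (le_of_eq ?_) this
    ring
  by_cases hsum : Summable (fun x : ℕ => (x.descFactorial 2 : ℝ) * q x ^ 1 * p x)
  · have hm0 : 0 ≤ mom p q 2 1 := tsum_nonneg hw0
    apply div_le_of_le_mul₀ hm0 hK0.le
    unfold mom
    rw [← tsum_mul_left]
    have hsK := hsum.mul_left K
    refine Summable.tsum_le_tsum hle ?_ hsK
    refine Summable.of_nonneg_of_le (fun x => ?_) hle hsK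
    have := binP_nonneg_aux (n := x - 2) (hq0 x) (hq1 x) s
    have := binP_nonneg_aux (n := x - 2) (hq0 x) (hq1 x) t
    have := hq0 x
    have := hpnn x
    positivity
  · have : mom p q 2 1 = 0 := tsum_eq_zero_of_not_summable hsum
    rw [this, div_zero]
    exact hK0.le
end
end
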